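/- arXiv:1909.05924 — 2 statements merged into one kernel-verified Lean document; each statement's English description precedes it below -/
import Mathlib

section
/- For every even m ≥ 2 and every l ≥ 1, TC^Σ_2((S^m)^l) = 2l+1 and TC^β_{2l}(S^m) = 2l+1, where S^m is the unit sphere in ℝ^{m+1} and (S^m)^l carries the product topology. -/
open unitInterval

noncomputable section

/-- The point `j/(n-1)` of the unit interval, for `j : Fin n`.
These are the `n` evaluation points `0, 1/(n-1), …, (n-2)/(n-1), 1`. -/
def evalPt (n : ℕ) (j : Fin n) : unitInterval :=
  ⟨(j : ℝ) / ((n : ℝ) - 1), by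
    have hn : 1 ≤ n := j.pos
    rcases eq_or_lt_of_le hn with h | h
    · have hn1 : n = 1 := h.symm
      subst hn1
      simp [Fin.fin_one_eq_zero j]
    · have h1 : (0 : ℝ) < (n : ℝ) - 1 := by
        have : (1 : ℝ) < (n : ℝ) := by exact_mod_cast h
        linarith
      constructor
      · exact div_nonneg (Nat.cast_nonneg _) h1.le
      · rw [div_le_one h1]
        have hj : (j : ℕ) + 1 ≤ n := j.is_lt
        have : ((j : ℕ) : ℝ) + 1 ≤ (n : ℝ) := by exact_mod_cast hj
        linarith⟩

/-- Coordinate reversal (the involution `β`) on `n`-tuples: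
`β·(x_1,…,x_n) = (x_n,…,x_1)`. -/
def rtuple {X : Type*} {n : ℕ} (x : Fin n → X) : Fin n → X := fun j => x j.rev

/-- Path reversal (the involution `β`) on the free path space `C(I,X)`:
`(β·γ)(t) = γ(1-t)`. -/
def rpath {X : Type*} [TopologicalSpace X] (γ : C(unitInterval, X)) : C(unitInterval, X) :=
  γ.comp ⟨unitInterval.symm, unitInterval.continuous_symm⟩

/-- `X^n` can be covered by `k` open sets, on each of which there is a continuous
section of the evaluation map `e_n : C(I,X) → X^n`,
`γ ↦ (γ(0), γ(1/(n-1)), …, γ(1))`. -/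
def HasPlanners (X : Type*) [TopologicalSpace X] (n k : ℕ) : Prop :=
  ∃ U : Fin k → Set (Fin n → X),
    (∀ i, IsOpen (U i)) ∧ (⋃ i, U i) = Set.univ ∧
    (∀ i, ∃ s : C(U i, C(unitInterval, X)),
      ∀ x : U i, ∀ j : Fin n, s x (evalPt n j) = (x : Fin n → X) j)

/-- The `n`-th (ordinary, higher) topological complexity `TC_n(X)`, as a value in `ℕ∞`. -/
def TCn (X : Type*) [TopologicalSpace X] (n : ℕ) : ℕ∞ :=
  sInf {k : ℕ∞ | ∃ m : ℕ, (m : ℕ∞) = k ∧ HasPlanners X n m}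

/-- `X^n` can be covered by `k` β-invariant open sets, on each of which there is a
continuous β-equivariant section of the evaluation map `e_n : C(I,X) → X^n`
(a bidirectional motion planner). -/
def HasBidirPlanners (X : Type*) [TopologicalSpace X] (n k : ℕ) : Prop :=
  ∃ U : Fin k → Set (Fin n → X),
    (∀ i, IsOpen (U i)) ∧ (⋃ i, U i) = Set.univ ∧
    (∀ i, ∀ x ∈ U i, rtuple x ∈ U i) ∧
    (∀ i, ∃ s : C(U i, C(unitInterval, X)),
      (∀ x : U i, ∀ j : Fin n, s x (evalPt n j) = (x : Fin n → X) j) ∧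
      (∀ x : U i, ∀ hx : rtuple (x : Fin n → X) ∈ U i,
        s ⟨rtuple (x : Fin n → X), hx⟩ = rpath (s x)))

/-- The `n`-th bidirectional topological complexity `TC^β_n(X)`, as a value in `ℕ∞`. -/
def TCbeta (X : Type*) [TopologicalSpace X] (n : ℕ) : ℕ∞ :=
  sInf {k : ℕ∞ | ∃ m : ℕ, (m : ℕ∞) = k ∧ HasBidirPlanners X n m}

/-- The action of a permutation `sg ∈ Σ_n` on `n`-tuples (by permuting coordinates). -/
def permTuple {X : Type*} {n : ℕ} (sg : Equiv.Perm (Fin n)) (x : Fin n → X) : Fin n → X :=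
  fun j => x (sg j)

/-- `X^n` can be covered by `k` `Σ_n`-invariant open sets, on each of which there is a
continuous `Σ_n`-equivariant section of `E_n : X^{J_n} → X^n`,
`(α_1,…,α_n) ↦ (α_1(1),…,α_n(1))`, where `X^{J_n}` is the space of `n`-tuples of paths
with a common initial point. -/
def HasSymPlanners (X : Type*) [TopologicalSpace X] (n k : ℕ) : Prop :=
  ∃ U : Fin k → Set (Fin n → X),
    (∀ i, IsOpen (U i)) ∧ (⋃ i, U i) = Set.univ ∧
    (∀ i, ∀ sg : Equiv.Perm (Fin n), ∀ x ∈ U i, permTuple sg x ∈ U i) ∧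
    (∀ i, ∃ s : C(U i, Fin n → C(unitInterval, X)),
      (∀ x : U i, ∀ j j' : Fin n, s x j 0 = s x j' 0) ∧
      (∀ x : U i, ∀ j : Fin n, s x j 1 = (x : Fin n → X) j) ∧
      (∀ x : U i, ∀ sg : Equiv.Perm (Fin n),
        ∀ hx : permTuple sg (x : Fin n → X) ∈ U i,
        s ⟨permTuple sg (x : Fin n → X), hx⟩ = permTuple sg (s x)))

/-- The `n`-th symmetrized topological complexity `TC^Σ_n(X)`, as a value in `ℕ∞`. -/
def TCsym (X : Type*) [TopologicalSpace X] (n : ℕ) : ℕ∞ :=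
  sInf {k : ℕ∞ | ∃ m : ℕ, (m : ℕ∞) = k ∧ HasSymPlanners X n m}

/-- The unit sphere `S^m ⊂ ℝ^{m+1}`. -/
abbrev Sph (m : ℕ) : Type :=
  Metric.sphere (0 : EuclideanSpace ℝ (Fin (m + 1))) 1

end

/-!
Lower bound. A section of `e_n` on an open set moves, along a stretch of path between two evaluation
points, one coordinate to another. Pair the `2p` coordinates of `(S^m)^κ` into `N = p * card κ`
pairs of points of `S^m`, and suppose that `2N` open sets with sections suffice. Assign two of them
to each pair, and cut off the two resulting homotopies from the first point of the pair towards the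
second by a bump covering: at every configuration one of the `2N` homotopies ends at the second
point. This contradicts the following fact: for even `m`, some configuration has all `2N` homotopies
ending at the antipode of the second point of their pair.

The fact is a degree argument. Compose one homotopy of each pair with an isotopy from the identity
to a half-turn about a line, which exists for even `m`. At the other end of the homotopies, the
common coincidences with the second points are then the fixed points of the half-turn, which all
contribute to the degree with the same sign. The degree is represented by the integral of a Jacobian
determinant, whose invariance under homotopies is the Piola identity.

Upper bound. Fix `b` in the sphere and order the coordinates of a point of `(S^m)^η` by their inner
product with `b`. The configurations whose `k` lowest points are strictly below the others, none of
the lower points being `b` and none of the upper ones `-b`, form an open set, and those with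
`k ≤ card η` cover. On each of them all points move to `b` equivariantly: the upper ones along great
circles, the lower ones along great circles to `-b` and then along a fixed path. Running from the
`j`-th evaluation point in both time directions along the motion of the `j`-th coordinate gives
reversal-equivariant paths.
-/

open Set Filter Topology MeasureTheory Metric
open scoped ContDiff InnerProductSpace

noncomputable section

namespace SphereTC

section Jacobian

theorem contDiff_fderiv_apply {E : Type*} [NormedAddCommGroup E] [NormedSpace ℝ E] {f : E → ℝ}
    {n : WithTop ℕ∞} (hf : ContDiff ℝ (n + 1) f) (v : E) :
    ContDiff ℝ n fun x => fderiv ℝ f x v :=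
  (hf.fderiv_right le_rfl).clm_apply contDiff_const

theorem fderiv_fderiv_apply_comm {E : Type*} [NormedAddCommGroup E] [NormedSpace ℝ E] {f : E → ℝ}
    (hf : ContDiff ℝ 2 f) (v w x : E) :
    fderiv ℝ (fun y => fderiv ℝ f y w) x v = fderiv ℝ (fun y => fderiv ℝ f y v) x w := by
  have hdiff : DifferentiableAt ℝ (fderiv ℝ f) x :=
    (hf.fderiv_right (m := 1) le_rfl).differentiable one_ne_zero x
  have hsymm : IsSymmSndFDerivAt ℝ f x := hf.contDiffAt.isSymmSndFDerivAt (by simp)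
  simpa only [fderiv_clm_apply hdiff (differentiableAt_const _), fderiv_fun_const,
    Pi.zero_apply, ContinuousLinearMap.comp_zero, zero_add, ContinuousLinearMap.flip_apply]
    using hsymm v w

theorem exists_contDiff_homotopy_approx.{u, v} {E : Type u} [NormedAddCommGroup E]
    [NormedSpace ℝ E] [FiniteDimensional ℝ E] {F : Type v} [NormedAddCommGroup F] [NormedSpace ℝ F]
    [TietzeExtension.{u} F] {C : Set E} (hC : IsClosed C) {H : ℝ × E → F}
    (hH : ContinuousOn H (Icc 0 1 ×ˢ C)) {Q : E → F} {n : ℕ∞} (hQ : ContDiff ℝ n Q)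
    (hHQ : ∀ x ∈ C, H (1, x) = Q x) {ε : ℝ} (hε : 0 < ε) :
    ∃ P : ℝ × E → F, ContDiff ℝ n P ∧ (∀ x, P (1, x) = Q x) ∧
      ∀ t ∈ Icc (0 : ℝ) 1, ∀ x ∈ C, ‖P (t, x) - H (t, x)‖ < ε := by
  obtain ⟨G, hG⟩ := ContinuousMap.exists_restrict_eq (isClosed_Icc.prod hC)
    (⟨_, hH.domRestrict⟩ : C(↥(Icc (0 : ℝ) 1 ×ˢ C), F))
  have hGH : ∀ p ∈ Icc (0 : ℝ) 1 ×ˢ C, G p = H p := fun p hp => DFunLike.congr_fun hG ⟨p, hp⟩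
  obtain ⟨P, hP, hPG, -⟩ := G.continuous.exists_contDiff_approx n
    (continuous_const (y := ε / 2)) fun _ => half_pos hε
  refine ⟨fun p => P p + p.1 • (Q p.2 - P (1, p.2)),
    hP.add (contDiff_fst.smul ((hQ.comp contDiff_snd).sub
      (hP.comp (contDiff_const.prodMk contDiff_snd)))), fun x => by simp, fun t ht x hx => ?_⟩
  have hPt : ‖P (t, x) - H (t, x)‖ < ε / 2 := by
    rw [← hGH (t, x) ⟨ht, hx⟩, ← dist_eq_norm]
    exact hPG _
  have hP1 : ‖Q x - P (1, x)‖ < ε / 2 := by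
    rw [← hHQ x hx, ← hGH (1, x) ⟨by simp, hx⟩, ← dist_eq_norm, dist_comm]
    exact hPG _
  calc ‖P (t, x) + t • (Q x - P (1, x)) - H (t, x)‖
    _ ≤ ‖P (t, x) - H (t, x)‖ + ‖t • (Q x - P (1, x))‖ := by
      rw [add_sub_right_comm]
      exact norm_add_le _ _
    _ ≤ ‖P (t, x) - H (t, x)‖ + ‖Q x - P (1, x)‖ := by
      rw [norm_smul, Real.norm_of_nonneg ht.1]
      gcongr
      exact mul_le_of_le_one_left (norm_nonneg _) ht.2
    _ < ε := by linarith

theorem exists_isCompact_zeros_subset_interior {X F : Type*} [TopologicalSpace X] [T2Space X]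
    [LocallyCompactSpace X] [TopologicalSpace F] [T1Space F] [Zero F] {D : Set X} (hD : IsOpen D)
    (hDc : IsCompact (closure D)) {H : ℝ × X → F} (hH : ContinuousOn H (Icc 0 1 ×ˢ closure D))
    (hHD : ∀ t ∈ Icc (0 : ℝ) 1, ∀ x ∈ frontier D, H (t, x) ≠ 0) :
    ∃ K, IsCompact K ∧ K ⊆ D ∧
      ∀ t ∈ Icc (0 : ℝ) 1, ∀ x ∈ closure D, H (t, x) = 0 → x ∈ interior K := by
  have hzeros : IsCompact (Prod.snd '' (Icc 0 1 ×ˢ closure D ∩ H ⁻¹' {0})) :=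
    ((isCompact_Icc.prod hDc).of_isClosed_subset
      (hH.preimage_isClosed_of_isClosed (isClosed_Icc.prod isClosed_closure) isClosed_singleton)
      inter_subset_left).image continuous_snd
  obtain ⟨K, hK, hzerosK, hKD⟩ := exists_compact_between hzeros hD <| by
    rintro _ ⟨⟨t, x⟩, ⟨⟨ht, hx⟩, hHx⟩, rfl⟩
    by_contra hxD
    exact hHD t ht x ⟨hx, hD.interior_eq.symm ▸ hxD⟩ hHx
  exact ⟨K, hK, hKD, fun t ht x hx hHx => hzerosK ⟨(t, x), ⟨⟨ht, hx⟩, hHx⟩, rfl⟩⟩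

variable {ι : Type*} [DecidableEq ι]

/-- The Jacobian matrix at `x` of the self-map of `ι → ℝ` with components `u i`. -/
def jacobianMatrix (u : ι → (ι → ℝ) → ℝ) (x : ι → ℝ) : Matrix ι ι ℝ :=
  .of fun i j => fderiv ℝ (u i) x (Pi.single j 1)

theorem jacobianMatrix_congr {u v : ι → (ι → ℝ) → ℝ} {x : ι → ℝ}
    (huv : ∀ i, u i =ᶠ[𝓝 x] v i) : jacobianMatrix u x = jacobianMatrix v x := by
  ext i j
  simp only [jacobianMatrix, Matrix.of_apply, (huv i).fderiv_eq]

theorem jacobianMatrix_update (u : ι → (ι → ℝ) → ℝ) (k : ι) (v : (ι → ℝ) → ℝ) (x : ι → ℝ) :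
    jacobianMatrix (Function.update u k v) x =
      (jacobianMatrix u x).updateRow k fun j => fderiv ℝ v x (Pi.single j 1) := by
  ext i j
  rcases eq_or_ne i k with rfl | hik
  · simp [jacobianMatrix]
  · simp [jacobianMatrix, hik]

variable [Fintype ι]

theorem sum_sign_mul_eq_zero {R : Type*} [CommRing R] {f : Equiv.Perm ι → R} {i j : ι}
    (hij : i ≠ j) (hf : ∀ τ, f (τ * Equiv.swap i j) = f τ) :
    ∑ τ : Equiv.Perm ι, (τ.sign : R) * f τ = 0 := by
  refine Finset.sum_involution (fun τ _ => τ * Equiv.swap i j) (fun τ _ => ?_) (fun τ _ _ => ?_)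
    (fun _ _ => Finset.mem_univ _) (fun τ _ => ?_)
  · rw [hf, Equiv.Perm.sign_mul, Equiv.Perm.sign_swap hij]
    push_cast
    ring
  · simpa using hij
  · rw [mul_assoc, Equiv.swap_mul_self, mul_one]

/-- The product of all but the `k`-th factor in the term of `det (jacobianMatrix u)` belonging
to `τ`. -/
def jacobianCofactorTerm (u : ι → (ι → ℝ) → ℝ) (k : ι) (τ : Equiv.Perm ι) (x : ι → ℝ) : ℝ :=
  ∏ i ∈ Finset.univ.erase k, fderiv ℝ (u i) x (Pi.single (τ i) 1)

theorem contDiff_jacobianCofactorTerm {u : ι → (ι → ℝ) → ℝ} (hu : ∀ i, ContDiff ℝ 2 (u i))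
    (k : ι) (τ : Equiv.Perm ι) : ContDiff ℝ 1 (jacobianCofactorTerm u k τ) :=
  contDiff_prod fun i _ => contDiff_fderiv_apply (hu i) _

theorem det_jacobianMatrix_eq_sum (u : ι → (ι → ℝ) → ℝ) (k : ι) (x : ι → ℝ) :
    (jacobianMatrix u x).det = ∑ τ : Equiv.Perm ι, (τ.sign : ℝ) *
      (jacobianCofactorTerm u k τ x * fderiv ℝ (u k) x (Pi.single (τ k) 1)) := by
  rw [← Matrix.det_transpose, Matrix.det_apply']
  refine Finset.sum_congr rfl fun τ _ => congrArg _ ?_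
  rw [jacobianCofactorTerm, Finset.prod_erase_mul _ _ (Finset.mem_univ k)]
  rfl

/-- The Piola identity: second derivatives cancel in pairs. -/
theorem sum_sign_mul_fderiv_jacobianCofactorTerm {u : ι → (ι → ℝ) → ℝ}
    (hu : ∀ i, ContDiff ℝ 2 (u i)) (k : ι) (x : ι → ℝ) :
    ∑ τ : Equiv.Perm ι, (τ.sign : ℝ) *
      fderiv ℝ (jacobianCofactorTerm u k τ) x (Pi.single (τ k) 1) = 0 := by
  have hprod (τ : Equiv.Perm ι) :
      fderiv ℝ (jacobianCofactorTerm u k τ) x (Pi.single (τ k) 1) =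
        ∑ i ∈ Finset.univ.erase k,
          (∏ j ∈ (Finset.univ.erase k).erase i, fderiv ℝ (u j) x (Pi.single (τ j) 1)) *
            fderiv ℝ (fun y => fderiv ℝ (u i) y (Pi.single (τ i) 1)) x (Pi.single (τ k) 1) := by
    unfold jacobianCofactorTerm
    rw [fderiv_finsetProd fun i _ =>
      (contDiff_fderiv_apply (hu i) _).differentiable one_ne_zero x]
    simp
  simp_rw [hprod, Finset.mul_sum]
  rw [Finset.sum_comm]
  refine Finset.sum_eq_zero fun i hi => ?_
  have hik : i ≠ k := Finset.ne_of_mem_erase hi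
  refine sum_sign_mul_eq_zero hik.symm fun τ => ?_
  simp only [Equiv.Perm.mul_apply, Equiv.swap_apply_left, Equiv.swap_apply_right]
  rw [fderiv_fderiv_apply_comm (hu i)]
  refine congrArg (· * _) (Finset.prod_congr rfl fun j hj => ?_)
  simp only [Finset.mem_erase] at hj
  rw [Equiv.swap_apply_of_ne_of_ne hj.2.1 hj.1]

theorem integral_mul_fderiv_eq_neg_of_hasCompactSupport {E : Type*} [NormedAddCommGroup E]
    [NormedSpace ℝ E] [FiniteDimensional ℝ E] [MeasurableSpace E] [BorelSpace E]
    {μ : Measure E} [μ.IsAddHaarMeasure] {f g : E → ℝ} (hf : ContDiff ℝ 1 f)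
    (hg : ContDiff ℝ 1 g) (hgc : HasCompactSupport g) (v : E) :
    ∫ x, f x * fderiv ℝ g x v ∂μ = -∫ x, fderiv ℝ f x v * g x ∂μ :=
  integral_mul_fderiv_eq_neg_fderiv_mul_of_integrable
    (((contDiff_fderiv_apply (n := 0) hf v).continuous.mul
      hg.continuous).integrable_of_hasCompactSupport hgc.mul_left)
    ((hf.continuous.mul (contDiff_fderiv_apply (n := 0) hg
      v).continuous).integrable_of_hasCompactSupport (hgc.fderiv_apply (𝕜 := ℝ) v).mul_left)
    ((hf.continuous.mul hg.continuous).integrable_of_hasCompactSupport hgc.mul_left)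
    (fun x _ => hf.differentiable one_ne_zero x) (fun x _ => hg.differentiable one_ne_zero x)

theorem integral_det_jacobianMatrix_eq_zero {u : ι → (ι → ℝ) → ℝ}
    (hu : ∀ i, ContDiff ℝ 2 (u i)) {k : ι} (hk : HasCompactSupport (u k)) :
    ∫ x, (jacobianMatrix u x).det = 0 := by
  have hcof (τ : Equiv.Perm ι) := contDiff_jacobianCofactorTerm hu k τ
  have huk : ContDiff ℝ 1 (u k) := (hu k).of_le one_le_two
  simp_rw [det_jacobianMatrix_eq_sum u k]
  calc ∫ x, ∑ τ : Equiv.Perm ι, (τ.sign : ℝ) *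
        (jacobianCofactorTerm u k τ x * fderiv ℝ (u k) x (Pi.single (τ k) 1))
    _ = ∑ τ : Equiv.Perm ι, (τ.sign : ℝ) *
        ∫ x, jacobianCofactorTerm u k τ x * fderiv ℝ (u k) x (Pi.single (τ k) 1) := by
      rw [integral_finsetSum]
      · simp_rw [integral_const_mul]
      · exact fun τ _ => (((hcof τ).continuous.mul (contDiff_fderiv_apply (n := 0) huk
          _).continuous).integrable_of_hasCompactSupport
            (hk.fderiv_apply (𝕜 := ℝ) _).mul_left).const_mul _
    _ = -∑ τ : Equiv.Perm ι, (τ.sign : ℝ) *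
        ∫ x, fderiv ℝ (jacobianCofactorTerm u k τ) x (Pi.single (τ k) 1) * u k x := by
      simp_rw [integral_mul_fderiv_eq_neg_of_hasCompactSupport (hcof _) huk hk, mul_neg,
        Finset.sum_neg_distrib]
    _ = -∫ x, (∑ τ : Equiv.Perm ι, (τ.sign : ℝ) *
        fderiv ℝ (jacobianCofactorTerm u k τ) x (Pi.single (τ k) 1)) * u k x := by
      simp_rw [Finset.sum_mul, ← integral_const_mul, mul_assoc]
      rw [integral_finsetSum]
      exact fun τ _ => (((contDiff_fderiv_apply (n := 0) (hcof τ) _).continuous.mul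
        huk.continuous).integrable_of_hasCompactSupport hk.mul_left).const_mul _
    _ = 0 := by simp [sum_sign_mul_fderiv_jacobianCofactorTerm hu k]

theorem continuous_det_jacobianMatrix {u : ι → (ι → ℝ) → ℝ} (hu : ∀ i, ContDiff ℝ 1 (u i)) :
    Continuous fun x => (jacobianMatrix u x).det :=
  Continuous.matrix_det <| continuous_matrix fun i _ =>
    (contDiff_fderiv_apply (n := 0) (hu i) _).continuous

theorem integrableOn_det_jacobianMatrix {u : ι → (ι → ℝ) → ℝ} (hu : ∀ i, ContDiff ℝ 1 (u i))
    {D : Set (ι → ℝ)} (hD : Bornology.IsBounded D) :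
    IntegrableOn (fun x => (jacobianMatrix u x).det) D :=
  ((continuous_det_jacobianMatrix hu).continuousOn.integrableOn_compact
    hD.isCompact_closure).mono_set subset_closure

theorem indicator_eventuallyEq_zero {X F : Type*} [TopologicalSpace X] [Zero F] {D K : Set X}
    {f : X → F} (hK : IsClosed K) (hf : ∀ x ∈ D, x ∉ K → f x = 0) {x : X} (hx : x ∉ K) :
    D.indicator f =ᶠ[𝓝 x] fun _ => 0 := by
  filter_upwards [hK.isOpen_compl.mem_nhds hx] with y hy
  exact Set.indicator_apply_eq_zero.2 fun hyD => hf y hyD hy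

theorem contDiff_indicator {E F : Type*} [NormedAddCommGroup E] [NormedSpace ℝ E]
    [NormedAddCommGroup F] [NormedSpace ℝ F] {n : WithTop ℕ∞} {D K : Set E} {f : E → F}
    (hD : IsOpen D) (hK : IsClosed K) (hKD : K ⊆ D) (hf : ContDiff ℝ n f)
    (hfK : ∀ x ∈ D, x ∉ K → f x = 0) : ContDiff ℝ n (D.indicator f) := by
  refine contDiff_iff_contDiffAt.2 fun x => ?_
  by_cases hx : x ∈ D
  · exact hf.contDiffAt.congr_of_eventuallyEq
      (Set.eqOn_indicator.eventuallyEq_of_mem (hD.mem_nhds hx))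
  · exact contDiffAt_const.congr_of_eventuallyEq
      (indicator_eventuallyEq_zero hK hfK fun hxK => hx (hKD hxK))

theorem setIntegral_det_jacobianMatrix_update {D K : Set (ι → ℝ)} (hD : IsOpen D)
    (hDb : Bornology.IsBounded D) (hK : IsCompact K) (hKD : K ⊆ D) {u : ι → (ι → ℝ) → ℝ}
    {v : (ι → ℝ) → ℝ} (hu : ∀ i, ContDiff ℝ 2 (u i)) (hv : ContDiff ℝ 2 v) {k : ι}
    (huv : ∀ x ∈ D, x ∉ K → v x = u k x) :
    ∫ x in D, (jacobianMatrix (Function.update u k v) x).det =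
      ∫ x in D, (jacobianMatrix u x).det := by
  set w : (ι → ℝ) → ℝ := D.indicator fun x => v x - u k x with hw
  have hwK : ∀ x ∈ D, x ∉ K → v x - u k x = 0 := fun x hxD hxK => sub_eq_zero.2 (huv x hxD hxK)
  have hw_diff : ContDiff ℝ 2 w := contDiff_indicator hD hK.isClosed hKD (hv.sub (hu k)) hwK
  have hw_zero {x : ι → ℝ} (hx : x ∉ K) : w =ᶠ[𝓝 x] fun _ => 0 :=
    indicator_eventuallyEq_zero hK.isClosed hwK hx
  have hw_supp : HasCompactSupport w := .intro hK fun x hx => (hw_zero hx).self_of_nhds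
  have hupdate : ∀ i, ContDiff ℝ 2 (Function.update u k w i) := fun i => by
    rcases eq_or_ne i k with rfl | hik
    · simpa only [Function.update_self] using hw_diff
    · simpa only [Function.update_of_ne hik] using hu i
  have hint : ∫ x in D, (jacobianMatrix (Function.update u k w) x).det = 0 := by
    rw [setIntegral_eq_integral_of_forall_compl_eq_zero]
    · exact integral_det_jacobianMatrix_eq_zero hupdate
        (k := k) (by simpa only [Function.update_self] using hw_supp)
    · intro x hx
      rw [jacobianMatrix_update, (hw_zero fun hxK => hx (hKD hxK)).fderiv_eq]
      exact Matrix.det_eq_zero_of_row_eq_zero k fun j => by simp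
  have hadd : ∀ x ∈ D, (jacobianMatrix (Function.update u k v) x).det =
      (jacobianMatrix u x).det + (jacobianMatrix (Function.update u k w) x).det := by
    intro x hx
    have hwx : w =ᶠ[𝓝 x] fun y => v y - u k y :=
      Set.eqOn_indicator.eventuallyEq_of_mem (hD.mem_nhds hx)
    have hrow : (fun j => fderiv ℝ v x (Pi.single j 1)) =
        jacobianMatrix u x k + fun j => fderiv ℝ w x (Pi.single j 1) := by
      ext j
      rw [hwx.fderiv_eq, fderiv_fun_sub (hv.differentiable two_ne_zero x)
        ((hu k).differentiable two_ne_zero x)]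
      simp [jacobianMatrix]
    rw [jacobianMatrix_update, jacobianMatrix_update, hrow, Matrix.det_updateRow_add,
      Matrix.updateRow_eq_self]
  rw [setIntegral_congr_fun hD.measurableSet hadd, integral_add
    (integrableOn_det_jacobianMatrix (fun i => (hu i).of_le one_le_two) hDb)
    (integrableOn_det_jacobianMatrix (fun i => (hupdate i).of_le one_le_two) hDb), hint, add_zero]

theorem setIntegral_det_jacobianMatrix_congr {D K : Set (ι → ℝ)} (hD : IsOpen D)
    (hDb : Bornology.IsBounded D) (hK : IsCompact K) (hKD : K ⊆ D) {u v : ι → (ι → ℝ) → ℝ}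
    (hu : ∀ i, ContDiff ℝ 2 (u i)) (hv : ∀ i, ContDiff ℝ 2 (v i))
    (huv : ∀ x ∈ D, x ∉ K → ∀ i, u i x = v i x) :
    ∫ x in D, (jacobianMatrix u x).det = ∫ x in D, (jacobianMatrix v x).det := by
  suffices h : ∀ s : Finset ι, ∫ x in D, (jacobianMatrix (s.piecewise u v) x).det =
      ∫ x in D, (jacobianMatrix v x).det by
    simpa using h Finset.univ
  intro s
  induction s using Finset.induction_on with
  | empty => simp
  | insert k s hk ih =>
    rw [Finset.piecewise_insert, ← ih]
    refine setIntegral_det_jacobianMatrix_update hD hDb hK hKD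
      (fun i => s.piecewise_cases u v _ (hu i) (hv i)) (hu k) fun x hxD hxK => ?_
    rw [Finset.piecewise_eq_of_notMem _ _ _ hk, huv x hxD hxK]

theorem det_jacobianMatrix {Q : (ι → ℝ) → ι → ℝ} {x : ι → ℝ} (hQ : DifferentiableAt ℝ Q x) :
    (jacobianMatrix (fun i y => Q y i) x).det = (fderiv ℝ Q x).det := by
  rw [ContinuousLinearMap.det, ← LinearMap.det_toMatrix']
  congr 1
  ext i j
  rw [LinearMap.toMatrix'_apply, jacobianMatrix, Matrix.of_apply, fderiv_apply hQ]
  rfl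

theorem det_jacobianMatrix_comp {χ : ℝ → ℝ} (hχ : Differentiable ℝ χ) {u : ι → (ι → ℝ) → ℝ}
    {x : ι → ℝ} (hu : ∀ i, DifferentiableAt ℝ (u i) x) :
    (jacobianMatrix (fun i y => χ (u i y)) x).det =
      (∏ i, deriv χ (u i x)) * (jacobianMatrix u x).det := by
  rw [← Matrix.det_mul_column]
  congr 1
  ext i j
  simp only [jacobianMatrix, Matrix.of_apply]
  simpa [Function.comp_def] using DFunLike.congr_fun
    ((hχ (u i x)).hasDerivAt.comp_hasFDerivAt x (hu i).hasFDerivAt).fderiv (Pi.single j 1)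

theorem det_jacobianMatrix_comp_eq_zero {χ : ℝ → ℝ} (hχ : Differentiable ℝ χ) {r : ℝ}
    (hr : 0 ≤ r) (hχr : ∀ t, r < |t| → deriv χ t = 0) {Q : (ι → ℝ) → ι → ℝ}
    {x : ι → ℝ} (hQ : DifferentiableAt ℝ Q x) (hx : r < ‖Q x‖) :
    (jacobianMatrix (fun i y => χ (Q y i)) x).det = 0 := by
  obtain ⟨i, hi⟩ : ∃ i, r < |Q x i| := by
    by_contra! hle
    exact hx.not_ge ((pi_norm_le_iff_of_nonneg hr).2 hle)
  rw [det_jacobianMatrix_comp hχ (u := fun i y => Q y i) (differentiableAt_pi.1 hQ),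
    Finset.prod_eq_zero (Finset.mem_univ i) (hχr _ hi), zero_mul]

theorem exists_contDiff_deriv_bump {r : ℝ} (hr : 0 < r) :
    ∃ χ : ℝ → ℝ, ContDiff ℝ ∞ χ ∧ (∀ t, r < |t| → deriv χ t = 0) ∧ (∀ t, 0 ≤ deriv χ t) ∧
      0 < deriv χ 0 := by
  let f : ContDiffBump (0 : ℝ) := ⟨r / 2, r, half_pos hr, half_lt_self hr⟩
  have hderiv (t : ℝ) : HasDerivAt (fun t => ∫ s in (0 : ℝ)..t, f s) (f t) t :=
    (f.continuous.integral_hasStrictDerivAt 0 t).hasDerivAt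
  refine ⟨fun t => ∫ s in (0 : ℝ)..t, f s, ?_, fun t ht => ?_, fun t => ?_, ?_⟩
  · rw [contDiff_infty_iff_deriv, funext fun t => (hderiv t).deriv]
    exact ⟨fun t => (hderiv t).differentiableAt, f.contDiff⟩
  · rw [(hderiv t).deriv]
    exact f.zero_of_le_dist (by simpa [f] using ht.le)
  · exact (hderiv t).deriv ▸ f.nonneg
  · rw [(hderiv 0).deriv, f.one_of_mem_closedBall (mem_closedBall_self (half_pos hr).le)]
    exact one_pos

/-- The integral over `D` of the Jacobian determinant of `Q` followed by `χ` in each coordinate.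
For `χ` constant outside `[-r, r]` and `r < ‖Q‖` near the boundary of `D` it is, up to a factor
depending on `χ` only, the Brouwer degree of `Q` on `D` at `0`. -/
def cutoffDegree (χ : ℝ → ℝ) (D : Set (ι → ℝ)) (Q : (ι → ℝ) → ι → ℝ) : ℝ :=
  ∫ x in D, (jacobianMatrix (fun i y => χ (Q y i)) x).det

theorem cutoffDegree_eq_zero {χ : ℝ → ℝ} (hχ : Differentiable ℝ χ) {r : ℝ} (hr : 0 ≤ r)
    (hχr : ∀ t, r < |t| → deriv χ t = 0) {D : Set (ι → ℝ)}
    {Q : (ι → ℝ) → ι → ℝ} (hQ : Differentiable ℝ Q) (hDQ : ∀ x ∈ D, r < ‖Q x‖) :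
    cutoffDegree χ D Q = 0 :=
  setIntegral_eq_zero_of_forall_eq_zero fun x hx =>
    det_jacobianMatrix_comp_eq_zero hχ hr hχr (hQ x) (hDQ x hx)

theorem cutoffDegree_homotopy {χ : ℝ → ℝ} (hχ : ContDiff ℝ 2 χ) {r : ℝ} (hr : 0 ≤ r)
    (hχr : ∀ t, r < |t| → deriv χ t = 0) {D K : Set (ι → ℝ)} (hD : IsOpen D)
    (hDb : Bornology.IsBounded D) (hK : IsCompact K) (hKD : K ⊆ D)
    {P : ℝ × (ι → ℝ) → ι → ℝ} (hP : ContDiff ℝ 2 P)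
    (hPK : ∀ t ∈ Icc (0 : ℝ) 1, ∀ x ∈ D, x ∉ K → r < ‖P (t, x)‖) :
    cutoffDegree χ D (fun x => P (0, x)) = cutoffDegree χ D fun x => P (1, x) := by
  obtain ⟨L, hL, hKL, hLD⟩ := exists_compact_between hK hD hKD
  obtain ⟨τ, hτK, hτL, hτI⟩ := exists_contMDiffMap_zero_one_nhds_of_isClosed (n := 2)
    (modelWithCornersSelf ℝ (ι → ℝ)) hK.isClosed isOpen_interior.isClosed_compl
    (disjoint_compl_right_iff_subset.2 hKL)
  have hτ : ContDiff ℝ 2 τ := τ.contMDiff.contDiff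
  have hPτ : ContDiff ℝ 2 fun x => P (τ x, x) := hP.comp (hτ.prodMk contDiff_id)
  have hPc (c : ℝ) : ContDiff ℝ 2 fun x => P (c, x) := hP.comp (contDiff_const.prodMk contDiff_id)
  have hχ1 : Differentiable ℝ χ := hχ.differentiable two_ne_zero
  calc cutoffDegree χ D (fun x => P (0, x))
    _ = cutoffDegree χ D fun x => P (τ x, x) := by
      refine setIntegral_congr_fun hD.measurableSet fun x hx => ?_
      by_cases hxK : x ∈ K
      · have hτx : ∀ᶠ y in 𝓝 x, τ y = 0 := eventually_nhdsSet_iff_forall.1 hτK x hxK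
        exact congrArg Matrix.det <| jacobianMatrix_congr fun i => hτx.mono fun y hy => by
          simp only [hy]
      · dsimp only
        rw [det_jacobianMatrix_comp_eq_zero hχ1 hr hχr ((hPc 0).differentiable two_ne_zero x)
            (hPK 0 (by simp) x hx hxK),
          det_jacobianMatrix_comp_eq_zero hχ1 hr hχr (hPτ.differentiable two_ne_zero x)
            (hPK (τ x) (hτI x) x hx hxK)]
    _ = cutoffDegree χ D fun x => P (1, x) :=
      setIntegral_det_jacobianMatrix_congr hD hDb hL hLD
        (fun i => hχ.comp (contDiff_pi.1 hPτ i)) (fun i => hχ.comp (contDiff_pi.1 (hPc 1) i))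
        fun x _ hxL i => by
          simp only [hτL.self_of_nhdsSet x fun hx => hxL (interior_subset hx)]

theorem mul_cutoffDegree_pos {χ : ℝ → ℝ} (hχ : ContDiff ℝ 1 χ) {r : ℝ} (hr : 0 ≤ r)
    (hχr : ∀ t, r < |t| → deriv χ t = 0) (hχn : ∀ t, 0 ≤ deriv χ t) (hχ0 : 0 < deriv χ 0)
    {D : Set (ι → ℝ)} (hD : IsOpen D) (hDb : Bornology.IsBounded D) {Q : (ι → ℝ) → ι → ℝ}
    (hQ : ContDiff ℝ 1 Q) {s : ℝ} (hs : ∀ x ∈ D, ‖Q x‖ ≤ r → 0 < s * (fderiv ℝ Q x).det)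
    {x₀ : ι → ℝ} (hx₀ : x₀ ∈ D) (hQx₀ : Q x₀ = 0) : 0 < s * cutoffDegree χ D Q := by
  have hχQ (i : ι) : ContDiff ℝ 1 fun y => χ (Q y i) := hχ.comp (contDiff_pi.1 hQ i)
  have hdet (x : ι → ℝ) : s * (jacobianMatrix (fun i y => χ (Q y i)) x).det =
      (∏ i, deriv χ (Q x i)) * (s * (fderiv ℝ Q x).det) := by
    have hQx : DifferentiableAt ℝ Q x := hQ.differentiable one_ne_zero x
    rw [det_jacobianMatrix_comp (hχ.differentiable one_ne_zero) (u := fun i y => Q y i)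
      (differentiableAt_pi.1 hQx), det_jacobianMatrix hQx]
    ring
  have hnonneg : ∀ x ∈ D, 0 ≤ s * (jacobianMatrix (fun i y => χ (Q y i)) x).det := by
    intro x hx
    rcases le_or_gt ‖Q x‖ r with hQx | hQx
    · rw [hdet]
      exact mul_nonneg (Finset.prod_nonneg fun i _ => hχn _) (hs x hx hQx).le
    · rw [det_jacobianMatrix_comp_eq_zero (hχ.differentiable one_ne_zero) hr hχr
        (hQ.differentiable one_ne_zero x) hQx, mul_zero]
  have hpos : 0 < s * (jacobianMatrix (fun i y => χ (Q y i)) x₀).det := by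
    rw [hdet]
    exact mul_pos (Finset.prod_pos fun i _ => by simpa [hQx₀] using hχ0)
      (hs x₀ hx₀ (by simpa [hQx₀] using hr))
  have hcont : Continuous fun x => s * (jacobianMatrix (fun i y => χ (Q y i)) x).det :=
    continuous_const.mul (continuous_det_jacobianMatrix hχQ)
  rw [cutoffDegree, ← integral_const_mul]
  refine (setIntegral_pos_iff_support_of_nonneg_ae
    ((ae_restrict_iff' hD.measurableSet).2 (Eventually.of_forall hnonneg))
    ((integrableOn_det_jacobianMatrix hχQ hDb).const_mul s)).2 ?_
  exact (hcont.isOpen_support.inter hD).measure_pos _ ⟨x₀, hpos.ne', hx₀⟩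

omit [DecidableEq ι]

theorem exists_norm_le_of_homotopy {D K : Set (ι → ℝ)} (hD : IsOpen D)
    (hDb : Bornology.IsBounded D) (hK : IsCompact K) (hKD : K ⊆ D) {P : ℝ × (ι → ℝ) → ι → ℝ}
    (hP : ContDiff ℝ 2 P) {r : ℝ} (hr : 0 < r)
    (hPK : ∀ t ∈ Icc (0 : ℝ) 1, ∀ x ∈ D, x ∉ K → r < ‖P (t, x)‖) {s : ℝ}
    (hs : ∀ x ∈ D, ‖P (1, x)‖ ≤ r → 0 < s * (fderiv ℝ (fun y => P (1, y)) x).det)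
    {x₀ : ι → ℝ} (hx₀ : x₀ ∈ D) (hPx₀ : P (1, x₀) = 0) : ∃ x ∈ D, ‖P (0, x)‖ ≤ r := by
  classical
  by_contra! hP0
  have hPc (c : ℝ) : ContDiff ℝ 2 fun x => P (c, x) := hP.comp (contDiff_const.prodMk contDiff_id)
  obtain ⟨χ, hχ, hχr, hχn, hχ0⟩ := exists_contDiff_deriv_bump hr
  have hzero : cutoffDegree χ D (fun x => P (0, x)) = 0 :=
    cutoffDegree_eq_zero (hχ.differentiable (by simp)) hr.le hχr
      ((hPc 0).differentiable two_ne_zero) hP0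
  have hone : 0 < s * cutoffDegree χ D fun x => P (1, x) :=
    mul_cutoffDegree_pos (hχ.of_le (by simp)) hr.le hχr hχn hχ0 hD hDb
      ((hPc 1).of_le one_le_two) hs hx₀ hPx₀
  rw [← cutoffDegree_homotopy (contDiff_infty.1 hχ 2) hr.le hχr hD hDb hK hKD hP hPK, hzero,
    mul_zero] at hone
  exact hone.false

theorem exists_zero_of_homotopy_pi {D : Set (ι → ℝ)} (hD : IsOpen D) (hDb : Bornology.IsBounded D)
    {H : ℝ × (ι → ℝ) → ι → ℝ} (hH : ContinuousOn H (Icc 0 1 ×ˢ closure D))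
    (hHD : ∀ t ∈ Icc (0 : ℝ) 1, ∀ x ∈ frontier D, H (t, x) ≠ 0) {Q : (ι → ℝ) → ι → ℝ}
    (hQ : ContDiff ℝ 2 Q) (hHQ : ∀ x ∈ closure D, H (1, x) = Q x) {s : ℝ}
    (hs : ∀ x ∈ closure D, Q x = 0 → 0 < s * (fderiv ℝ Q x).det) {x₀ : ι → ℝ} (hx₀ : x₀ ∈ D)
    (hQx₀ : Q x₀ = 0) : ∃ x ∈ closure D, H (0, x) = 0 := by
  by_contra! hH0
  have hC : IsCompact (closure D) := hDb.isCompact_closure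
  have hQ1 : ContDiff ℝ 1 Q := hQ.of_le one_le_two
  obtain ⟨K, hK, hKD, hzerosK⟩ := exists_isCompact_zeros_subset_interior hD hC hH hHD
  let N : Set (ι → ℝ) := closure D ∩ {x | s * (fderiv ℝ Q x).det ≤ 0}
  have hN : IsCompact N := hC.inter_right <| isClosed_le
    (continuous_const.mul (ContinuousLinearMap.continuous_det.comp
      (hQ1.continuous_fderiv one_ne_zero))) continuous_const
  let S : Set (ℝ × (ι → ℝ)) :=
    Icc 0 1 ×ˢ (closure D \ interior K) ∪ {0} ×ˢ closure D ∪ {1} ×ˢ N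
  have hS : IsCompact S := ((isCompact_Icc.prod (hC.diff isOpen_interior)).union
    (isCompact_singleton.prod hC)).union (isCompact_singleton.prod hN)
  have hS_sub : S ⊆ Icc 0 1 ×ˢ closure D := by
    rintro ⟨t, x⟩ ((⟨ht, hx, -⟩ | ⟨rfl, hx⟩) | ⟨rfl, hx, -⟩)
    exacts [⟨ht, hx⟩, ⟨by simp, hx⟩, ⟨by simp, hx⟩]
  have hS_ne : ∀ p ∈ S, 0 < ‖H p‖ := by
    rintro ⟨t, x⟩ hp
    refine norm_pos_iff.2 fun hHx => ?_
    rcases hp with (⟨ht, hx, hxK⟩ | ⟨rfl, hx⟩) | ⟨rfl, hx, hxN⟩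
    exacts [hxK (hzerosK t ht x hx hHx), hH0 x hx hHx, (hs x hx (hHQ x hx ▸ hHx)).not_ge hxN]
  obtain ⟨e, he, hHe⟩ := hS.exists_forall_le' (hH.mono hS_sub).norm hS_ne
  obtain ⟨P, hP, hPQ, hPH⟩ := exists_contDiff_homotopy_approx (n := 2) isClosed_closure hH hQ hHQ
    (half_pos he)
  have hP_lt : ∀ p ∈ S, e / 2 < ‖P p‖ := fun p hp => by
    have hclose : ‖P p - H p‖ < e / 2 := hPH p.1 (hS_sub hp).1 p.2 (hS_sub hp).2
    linarith [hHe p hp, norm_sub_norm_le (H p) (P p), norm_sub_rev (H p) (P p)]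
  obtain rfl : (fun x => P (1, x)) = Q := funext hPQ
  obtain ⟨x, hx, hPx⟩ := exists_norm_le_of_homotopy hD hDb hK hKD hP (half_pos he)
    (fun t ht x hx hxK => hP_lt (t, x) (.inl (.inl ⟨ht, subset_closure hx,
      fun hxK' => hxK (interior_subset hxK')⟩)))
    (fun x hx hPx => by
      by_contra! hneg
      exact hPx.not_gt (hP_lt (1, x) (.inr ⟨rfl, subset_closure hx, hneg⟩))) hx₀ hQx₀
  exact hPx.not_gt (hP_lt (0, x) (.inl (.inr ⟨rfl, subset_closure hx⟩)))

omit [Fintype ι]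

theorem exists_zero_of_homotopy {V : Type*} [NormedAddCommGroup V] [NormedSpace ℝ V]
    [FiniteDimensional ℝ V] {D : Set V} (hD : IsOpen D) (hDb : Bornology.IsBounded D)
    {H : ℝ × V → V} (hH : ContinuousOn H (Icc 0 1 ×ˢ closure D))
    (hHD : ∀ t ∈ Icc (0 : ℝ) 1, ∀ x ∈ frontier D, H (t, x) ≠ 0) {Q : V → V}
    (hQ : ContDiff ℝ 2 Q) (hHQ : ∀ x ∈ closure D, H (1, x) = Q x) {s : ℝ}
    (hs : ∀ x ∈ closure D, Q x = 0 → 0 < s * (fderiv ℝ Q x).det) {x₀ : V} (hx₀ : x₀ ∈ D)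
    (hQx₀ : Q x₀ = 0) : ∃ x ∈ closure D, H (0, x) = 0 := by
  let φ : V ≃L[ℝ] (Fin (Module.finrank ℝ V) → ℝ) := (Module.finBasis ℝ V).equivFunL
  have hclosure : closure (φ.symm ⁻¹' D) = φ.symm ⁻¹' closure D :=
    (φ.symm.toHomeomorph.preimage_closure D).symm
  have hfrontier : frontier (φ.symm ⁻¹' D) = φ.symm ⁻¹' frontier D :=
    (φ.symm.toHomeomorph.preimage_frontier D).symm
  have hbounded : Bornology.IsBounded (φ.symm ⁻¹' D) := by
    rw [← φ.image_eq_preimage_symm]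
    exact φ.lipschitz.isBounded_image hDb
  have hdet (x) : (fderiv ℝ (φ ∘ Q ∘ φ.symm) x).det = (fderiv ℝ Q (φ.symm x)).det := by
    rw [φ.comp_fderiv, φ.symm.comp_right_fderiv]
    exact LinearMap.det_conj _ φ.toLinearEquiv
  obtain ⟨x, hx, hHx⟩ := exists_zero_of_homotopy_pi (D := φ.symm ⁻¹' D)
    (H := fun p => φ (H (p.1, φ.symm p.2))) (Q := φ ∘ Q ∘ φ.symm) (s := s) (x₀ := φ x₀)
    (hD.preimage φ.symm.continuous) hbounded
    (by
      rw [hclosure]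
      exact φ.continuous.comp_continuousOn <| hH.comp
        (continuous_fst.prodMk (φ.symm.continuous.comp continuous_snd)).continuousOn
        fun p hp => hp)
    (fun t ht x hx => by
      rw [hfrontier] at hx
      simpa using hHD t ht _ hx)
    (φ.contDiff.comp (hQ.comp φ.symm.contDiff))
    (fun x hx => congrArg φ (hHQ _ (hclosure.subset hx)))
    (fun x hx hQx => hdet x ▸ hs _ (hclosure.subset hx) (by simpa using hQx))
    (by simpa using hx₀) (by simp [hQx₀])
  exact ⟨φ.symm x, hclosure.subset hx, by simpa using hHx⟩

end Jacobian

section Rotation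

variable {E : Type*} [NormedAddCommGroup E] [InnerProductSpace ℝ E]

/-- A one-parameter family of linear maps: it fixes `e` and, when `J` is an orthogonal complex
structure on the complement of `e`, rotates that complement by the angle `π * t`. -/
def rotationAbout (e : E) (J : E →L[ℝ] E) (t : ℝ) : E →L[ℝ] E :=
  (innerSL ℝ e).smulRight e +
    Real.cos (Real.pi * t) • (.id ℝ E - (innerSL ℝ e).smulRight e) + Real.sin (Real.pi * t) • J

theorem continuous_rotationAbout (e : E) (J : E →L[ℝ] E) : Continuous (rotationAbout e J) := by
  unfold rotationAbout
  fun_prop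

theorem rotationAbout_apply (e : E) (J : E →L[ℝ] E) (t : ℝ) (v : E) :
    rotationAbout e J t v = ⟪e, v⟫_ℝ • e + Real.cos (Real.pi * t) • (v - ⟪e, v⟫_ℝ • e) +
      Real.sin (Real.pi * t) • J v := by
  simp [rotationAbout]

theorem rotationAbout_zero (e : E) (J : E →L[ℝ] E) : rotationAbout e J 0 = .id ℝ E := by
  simp [rotationAbout]

theorem rotationAbout_one_apply (e : E) (J : E →L[ℝ] E) (v : E) :
    rotationAbout e J 1 v = (2 * ⟪e, v⟫_ℝ) • e - v := by
  rw [rotationAbout_apply, mul_one, Real.cos_pi, Real.sin_pi]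
  module

theorem norm_rotationAbout {e : E} (he : ‖e‖ = 1) {J : E →L[ℝ] E} (hJe : ∀ v, ⟪e, J v⟫_ℝ = 0)
    (hJv : ∀ v, ⟪v, J v⟫_ℝ = 0) (hJ : ∀ v, ‖J v‖ ^ 2 = ‖v‖ ^ 2 - ⟪e, v⟫_ℝ ^ 2) (t : ℝ) (v : E) :
    ‖rotationAbout e J t v‖ = ‖v‖ := by
  have hee : ⟪e, e⟫_ℝ = 1 := inner_self_eq_one_of_norm_eq_one he
  rw [← sq_eq_sq₀ (norm_nonneg _) (norm_nonneg _), rotationAbout_apply,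
    ← real_inner_self_eq_norm_sq]
  simp only [inner_add_left, inner_add_right, inner_sub_left, inner_sub_right, inner_smul_left,
    inner_smul_right, conj_trivial, hee, hJe, hJv, real_inner_comm e v, real_inner_comm _ (J v),
    real_inner_self_eq_norm_sq, hJ]
  linear_combination (‖v‖ ^ 2 - ⟪e, v⟫_ℝ ^ 2) * Real.sin_sq_add_cos_sq (Real.pi * t)

theorem rotationAbout_one_eq_of_fixed {e : E} (he : ‖e‖ = 1) {J : E →L[ℝ] E} {u : E}
    (hu : ‖u‖ = 1) (hfix : rotationAbout e J 1 u = u) (v : E) :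
    rotationAbout e J 1 v = (2 * ⟪u, v⟫_ℝ) • u - v := by
  have hue : u = ⟪e, u⟫_ℝ • e := by
    rw [rotationAbout_one_apply, sub_eq_iff_eq_add, ← two_smul ℝ u, mul_smul] at hfix
    exact (smul_right_injective E (two_ne_zero' ℝ) hfix).symm
  have hsq : ⟪e, u⟫_ℝ * ⟪e, u⟫_ℝ = 1 := by
    rw [hue, norm_smul, he, mul_one, Real.norm_eq_abs] at hu
    rw [← abs_mul_abs_self, hu, one_mul]
  have hcoeff : 2 * (⟪e, u⟫_ℝ * ⟪e, v⟫_ℝ) * ⟪e, u⟫_ℝ = 2 * ⟪e, v⟫_ℝ := by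
    linear_combination 2 * ⟪e, v⟫_ℝ * hsq
  rw [rotationAbout_one_apply, hue, inner_smul_left, conj_trivial, smul_smul, hcoeff]

/-- A sign on the indices that, for even `m`, tells apart the two members of each pair
`{k, k.rev}`. -/
def revSign {m : ℕ} (k : Fin m) : ℝ := if k < k.rev then -1 else 1

theorem revSign_sq {m : ℕ} (k : Fin m) : revSign k ^ 2 = 1 := by
  unfold revSign
  split_ifs <;> norm_num

theorem revSign_rev {m : ℕ} (hm : Even m) (k : Fin m) : revSign k.rev = -revSign k := by
  obtain ⟨n, rfl⟩ := hm
  have hk : (k : ℕ) < n + n := k.isLt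
  simp only [revSign, Fin.rev_rev, Fin.lt_def, Fin.val_rev]
  split_ifs <;> first | omega | norm_num

theorem sum_revSign_mul_mul_rev {m : ℕ} (hm : Even m) (a : Fin m → ℝ) :
    ∑ k, a k * (revSign k * a k.rev) = 0 := by
  have hrev : ∑ k, a k * (revSign k * a k.rev) = ∑ k, -(a k * (revSign k * a k.rev)) := by
    rw [← Equiv.sum_comp Fin.revPerm]
    refine Finset.sum_congr rfl fun k _ => ?_
    rw [Fin.revPerm_apply, Fin.rev_rev, revSign_rev hm]
    ring
  rw [Finset.sum_neg_distrib] at hrev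
  linarith

/-- For even `m`, an orthogonal complex structure on the hyperplane of vectors with last
coordinate `0`, extended by `0` to `ℝ^(m+1)`. -/
def complexStructure (m : ℕ) :
    EuclideanSpace ℝ (Fin (m + 1)) →L[ℝ] EuclideanSpace ℝ (Fin (m + 1)) :=
  LinearMap.toContinuousLinearMap
    { toFun v := WithLp.toLp 2
        (Fin.snoc (fun k => revSign k * v k.rev.castSucc) 0 : Fin (m + 1) → ℝ)
      map_add' v w := by
        ext i
        refine Fin.lastCases ?_ (fun k => ?_) i <;> simp [mul_add]
      map_smul' c v := by
        ext i
        refine Fin.lastCases ?_ (fun k => ?_) i <;> simp [mul_left_comm] }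

theorem complexStructure_apply_castSucc {m : ℕ} (v : EuclideanSpace ℝ (Fin (m + 1))) (k : Fin m) :
    complexStructure m v k.castSucc = revSign k * v k.rev.castSucc := by
  simp [complexStructure]

theorem complexStructure_apply_last {m : ℕ} (v : EuclideanSpace ℝ (Fin (m + 1))) :
    complexStructure m v (Fin.last m) = 0 := by
  simp [complexStructure]

theorem inner_complexStructure {m : ℕ} (hm : Even m) (v : EuclideanSpace ℝ (Fin (m + 1))) :
    ⟪v, complexStructure m v⟫_ℝ = 0 := by
  rw [PiLp.inner_apply, Fin.sum_univ_castSucc, complexStructure_apply_last]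
  simp only [complexStructure_apply_castSucc, RCLike.inner_apply, conj_trivial, zero_mul, add_zero]
  simpa only [mul_comm] using sum_revSign_mul_mul_rev hm fun k => v k.castSucc

theorem norm_sq_complexStructure {m : ℕ} (v : EuclideanSpace ℝ (Fin (m + 1))) :
    ‖complexStructure m v‖ ^ 2 = ‖v‖ ^ 2 - v (Fin.last m) ^ 2 := by
  simp only [EuclideanSpace.real_norm_sq_eq, Fin.sum_univ_castSucc, complexStructure_apply_last,
    complexStructure_apply_castSucc, mul_pow, revSign_sq, one_mul]
  rw [show ∑ k : Fin m, v k.rev.castSucc ^ 2 = ∑ k : Fin m, v k.castSucc ^ 2 from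
    Equiv.sum_comp Fin.revPerm fun k => v k.castSucc ^ 2]
  ring

/-- This is where the parity of `m` enters: `R 1` is a half-turn about a line, isotopic to the
identity. -/
theorem exists_norm_preserving_homotopy_to_halfTurn {m : ℕ} (hm : Even m) :
    ∃ R : ℝ → EuclideanSpace ℝ (Fin (m + 1)) →L[ℝ] EuclideanSpace ℝ (Fin (m + 1)),
      Continuous R ∧ R 0 = .id ℝ _ ∧ (∀ t v, ‖R t v‖ = ‖v‖) ∧
      (∃ u, ‖u‖ = 1 ∧ R 1 u = u) ∧
      ∀ u, ‖u‖ = 1 → R 1 u = u → ∀ v, R 1 v = (2 * ⟪u, v⟫_ℝ) • u - v := by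
  let e : EuclideanSpace ℝ (Fin (m + 1)) := EuclideanSpace.single (Fin.last m) 1
  have he : ‖e‖ = 1 := by simp [e]
  have hinner : ∀ v, ⟪e, v⟫_ℝ = v (Fin.last m) := fun v => by
    simp [e, EuclideanSpace.inner_single_left]
  refine ⟨rotationAbout e (complexStructure m), continuous_rotationAbout _ _,
    rotationAbout_zero _ _, norm_rotationAbout he (fun v => ?_) (inner_complexStructure hm)
      fun v => ?_, ⟨e, he, ?_⟩, fun u hu hfix => rotationAbout_one_eq_of_fixed he hu hfix⟩
  · rw [hinner, complexStructure_apply_last]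
  · rw [hinner, norm_sq_complexStructure]
  · rw [rotationAbout_one_apply, inner_self_eq_one_of_norm_eq_one he]
    module

end Rotation

section RadialProjection

variable {E : Type*} [NormedAddCommGroup E] [NormedSpace ℝ E] [Nontrivial E]

open scoped Classical in
/-- Radial projection to the unit sphere, with an arbitrary value at `0`. -/
def toSphere (v : E) : sphere (0 : E) 1 :=
  if hv : v = 0 then Classical.choice (NormedSpace.sphere_nonempty.2 zero_le_one).to_subtype
  else ⟨‖v‖⁻¹ • v, by simp [norm_smul, hv]⟩

theorem coe_toSphere {v : E} (hv : v ≠ 0) : (toSphere v : E) = ‖v‖⁻¹ • v := by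
  simp [toSphere, hv]

theorem norm_smul_toSphere {v : E} (hv : v ≠ 0) : ‖v‖ • (toSphere v : E) = v := by
  rw [coe_toSphere hv, smul_inv_smul₀ (norm_ne_zero_iff.2 hv)]

theorem toSphere_coe (x : sphere (0 : E) 1) : toSphere (x : E) = x :=
  Subtype.ext <| by simp [coe_toSphere (ne_zero_of_mem_unit_sphere x)]

theorem continuousOn_toSphere : ContinuousOn (toSphere (E := E)) {0}ᶜ := by
  rw [IsInducing.subtypeVal.continuousOn_iff]
  refine ContinuousOn.congr (f := fun v => ‖v‖⁻¹ • v) ?_ fun v hv => coe_toSphere hv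
  exact (continuousOn_id.norm.inv₀ fun v hv => norm_ne_zero_iff.2 hv).smul continuousOn_id

end RadialProjection

section Coincidence

variable {E : Type*} [NormedAddCommGroup E]

section PairShell

variable {κ : Type*}

/-- The pairs of vectors at distance between `1/2` and `2` from the origin, one for each index. -/
def pairShell (κ E : Type*) [NormedAddCommGroup E] : Set (κ → E × E) :=
  univ.pi fun _ => (ball 0 2 \ closedBall 0 (1 / 2)) ×ˢ (ball 0 2 \ closedBall 0 (1 / 2))

theorem mem_pairShell_of_norm_eq_one {z : κ → E × E}
    (hz : ∀ i, ‖(z i).1‖ = 1 ∧ ‖(z i).2‖ = 1) : z ∈ pairShell κ E := fun i _ => by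
  norm_num [hz i]

theorem isOpen_pairShell [Finite κ] : IsOpen (pairShell κ E) :=
  isOpen_set_pi finite_univ fun _ _ =>
    (isOpen_ball.sdiff isClosed_closedBall).prod (isOpen_ball.sdiff isClosed_closedBall)

theorem isBounded_pairShell : Bornology.IsBounded (pairShell κ E) :=
  .pi fun _ => (isBounded_ball.subset sdiff_subset).prod (isBounded_ball.subset sdiff_subset)

theorem ne_zero_of_mem_closure_pairShell {z : κ → E × E} (hz : z ∈ closure (pairShell κ E))
    (i : κ) : (z i).1 ≠ 0 ∧ (z i).2 ≠ 0 := by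
  have hA : closure (ball (0 : E) 2 \ closedBall 0 (1 / 2)) ⊆ {0}ᶜ :=
    (closure_minimal (fun v hv => hv.2 ∘ fun h => ball_subset_closedBall h)
      isOpen_ball.isClosed_compl).trans fun v hv (h : v = 0) => hv (by simp [h])
  rw [pairShell, closure_pi_set] at hz
  have hzi := hz i (mem_univ i)
  rw [closure_prod_eq] at hzi
  exact ⟨hA hzi.1, hA hzi.2⟩

end PairShell

section NormedSpace

variable [NormedSpace ℝ E]

/-- The homotopy whose zeros, for `‖z.1‖ = 1` and `t = 0`, are the solutions of `p = z.2 = q`. The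
norm factors keep its zeros on the product of unit spheres at every time, see
`norm_eq_one_of_coincidenceHomotopy_eq_zero`. -/
def coincidenceHomotopy (R : ℝ → E →L[ℝ] E) (t : ℝ) (p q : E) (z : E × E) : E × E :=
  ((1 - t + t * ‖z.1‖) • p - z.2, (1 - t + t * ‖z.1‖) • (R t q - ‖z.1‖ • z.2))

/-- The end at time `1` of `coincidenceHomotopy` along `p = q = z.1 / ‖z.1‖`. -/
def coincidenceEnd (T : E →L[ℝ] E) (z : E × E) : E × E :=
  (z.1 - z.2, T z.1 - ‖z.1‖ ^ 2 • z.2)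

/-- The derivative of `coincidenceEnd T` at each of its zeros, for `T` a half-turn about a line. -/
def coincidenceEndDeriv (E : Type*) [NormedAddCommGroup E] [NormedSpace ℝ E] :
    E × E →L[ℝ] E × E :=
  (ContinuousLinearMap.fst ℝ E E - .snd ℝ E E).prod (-.fst ℝ E E - .snd ℝ E E)

theorem norm_eq_one_of_coincidenceHomotopy_eq_zero {R : ℝ → E →L[ℝ] E}
    (hR : ∀ t v, ‖R t v‖ = ‖v‖) {t : ℝ} (ht : t ∈ Icc 0 1) {p q : E} (hp : ‖p‖ = 1)
    (hq : ‖q‖ = 1) {z : E × E} (hz : z.1 ≠ 0) (h : coincidenceHomotopy R t p q z = 0) :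
    ‖z.1‖ = 1 ∧ ‖z.2‖ = 1 := by
  obtain ⟨h₁, h₂⟩ := Prod.mk.inj h
  have ha : 0 < ‖z.1‖ := norm_pos_iff.2 hz
  set a := ‖z.1‖
  have hc : 0 < 1 - t + t * a := by
    obtain rfl | ht0 := ht.1.eq_or_lt
    · simp
    · have := mul_pos ht0 ha
      linarith [ht.2]
  have hz₂ : ‖z.2‖ = 1 - t + t * a := by
    rw [← sub_eq_zero.1 h₁, norm_smul, hp, mul_one, Real.norm_of_nonneg hc.le]
  have hmul : 1 = a * (1 - t + t * a) := by
    have hRq := congrArg norm (sub_eq_zero.1 ((smul_eq_zero.1 h₂).resolve_left hc.ne'))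
    rwa [hR, hq, norm_smul, hz₂, Real.norm_of_nonneg ha.le] at hRq
  have ha1 : a = 1 := by
    have hfactor : (a - 1) * (1 + t * a) = 0 := by linear_combination -hmul
    have hpos := mul_nonneg ht.1 ha.le
    exact sub_eq_zero.1 ((mul_eq_zero.1 hfactor).resolve_right (by linarith))
  exact ⟨ha1, by rw [hz₂, ha1]; ring⟩

theorem eq_of_coincidenceHomotopy_zero_eq_zero {R : ℝ → E →L[ℝ] E} (hR : R 0 = .id ℝ E)
    {p q : E} {z : E × E} (hz : ‖z.1‖ = 1) (h : coincidenceHomotopy R 0 p q z = 0) :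
    p = z.2 ∧ q = z.2 := by
  simpa [coincidenceHomotopy, hR, hz, sub_eq_zero] using h

theorem coincidenceHomotopy_one [Nontrivial E] (R : ℝ → E →L[ℝ] E) {z : E × E} (hz : z.1 ≠ 0) :
    coincidenceHomotopy R 1 (toSphere z.1) (toSphere z.1) z = coincidenceEnd (R 1) z := by
  simp only [coincidenceHomotopy, coincidenceEnd, sub_self, zero_add, one_mul, smul_sub,
    ← map_smul, norm_smul_toSphere hz, smul_smul, sq]

theorem eq_of_coincidenceEnd_eq_zero {T : E →L[ℝ] E} (hT : ∀ v, ‖T v‖ = ‖v‖) {z : E × E}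
    (hz : z.1 ≠ 0) (h : coincidenceEnd T z = 0) : ‖z.1‖ = 1 ∧ z.2 = z.1 ∧ T z.1 = z.1 := by
  obtain ⟨h₁, h₂⟩ := Prod.mk.inj h
  rw [← sub_eq_zero.1 h₁, sub_eq_zero] at h₂
  have hnorm : ‖z.1‖ = 1 := by
    have hsq := congrArg norm h₂
    rw [hT, norm_smul, norm_pow, norm_norm] at hsq
    exact (pow_eq_one_iff_of_nonneg (norm_nonneg _) two_ne_zero).1
      (mul_right_cancel₀ (norm_ne_zero_iff.2 hz) (by rw [← hsq, one_mul]))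
  exact ⟨hnorm, (sub_eq_zero.1 h₁).symm, by rw [h₂, hnorm, one_pow, one_smul]⟩

theorem injective_coincidenceEndDeriv : Function.Injective (coincidenceEndDeriv E) := by
  refine (injective_iff_map_eq_zero _).2 fun v hv => ?_
  obtain ⟨h₁, h₂⟩ := Prod.mk.inj hv
  have heq : v.1 = v.2 := sub_eq_zero.1 h₁
  have hzero : -v.1 - v.2 = 0 := h₂
  rw [heq, ← neg_add', neg_eq_zero, ← two_smul ℝ, smul_eq_zero] at hzero
  have := hzero.resolve_left two_ne_zero
  exact Prod.ext (heq.trans this) this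

variable {κ : Type*} [Nontrivial E]

/-- The unit vectors in the directions of the components of `z`. -/
def toSpherePair (z : κ → E × E) (i : κ) : sphere (0 : E) 1 × sphere (0 : E) 1 :=
  (toSphere (z i).1, toSphere (z i).2)

theorem continuousOn_toSpherePair :
    ContinuousOn (toSpherePair (κ := κ) (E := E)) (closure (pairShell κ E)) :=
  continuousOn_pi.2 fun i =>
    (continuousOn_toSphere.comp (by fun_prop) fun z hz =>
      (ne_zero_of_mem_closure_pairShell hz i).1).prodMk
    (continuousOn_toSphere.comp (by fun_prop) fun z hz =>
      (ne_zero_of_mem_closure_pairShell hz i).2)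

/-- `coincidenceHomotopy` for each index, along the values of two families of maps to the sphere at
the normalized configuration. -/
def pairHomotopy (R : ℝ → E →L[ℝ] E)
    (f g : κ → I × (κ → sphere (0 : E) 1 × sphere (0 : E) 1) → sphere (0 : E) 1)
    (p : ℝ × (κ → E × E)) (i : κ) : E × E :=
  coincidenceHomotopy R p.1 (f i (projIcc 0 1 zero_le_one p.1, toSpherePair p.2))
    (g i (projIcc 0 1 zero_le_one p.1, toSpherePair p.2)) (p.2 i)

theorem continuousOn_pairHomotopy {R : ℝ → E →L[ℝ] E} (hR : Continuous R)
    {f g : κ → I × (κ → sphere (0 : E) 1 × sphere (0 : E) 1) → sphere (0 : E) 1}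
    (hf : ∀ i, Continuous (f i)) (hg : ∀ i, Continuous (g i)) :
    ContinuousOn (pairHomotopy R f g) (Icc 0 1 ×ˢ closure (pairShell κ E)) := by
  have harg : ContinuousOn (fun p : ℝ × (κ → E × E) =>
      (projIcc (0 : ℝ) 1 zero_le_one p.1, toSpherePair p.2))
      (Icc 0 1 ×ˢ closure (pairShell κ E)) :=
    (continuous_projIcc.comp continuous_fst).continuousOn.prodMk
      (continuousOn_toSpherePair.comp continuousOn_snd fun p hp => hp.2)
  refine continuousOn_pi.2 fun i => ?_
  have hfi := (continuous_subtype_val.comp (hf i)).comp_continuousOn harg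
  have hgi := (continuous_subtype_val.comp (hg i)).comp_continuousOn harg
  have hc : Continuous fun p : ℝ × (κ → E × E) => 1 - p.1 + p.1 * ‖(p.2 i).1‖ := by fun_prop
  have hR' : ContinuousOn (fun p : ℝ × (κ → E × E) => R p.1)
      (Icc 0 1 ×ˢ closure (pairShell κ E)) := (hR.comp continuous_fst).continuousOn
  exact ((hc.continuousOn.smul hfi).sub (by fun_prop)).prodMk
    (hc.continuousOn.smul ((hR'.clm_apply hgi).sub (by fun_prop)))

theorem norm_eq_one_of_pairHomotopy_eq_zero {R : ℝ → E →L[ℝ] E} (hR : ∀ t v, ‖R t v‖ = ‖v‖)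
    {f g : κ → I × (κ → sphere (0 : E) 1 × sphere (0 : E) 1) → sphere (0 : E) 1} {t : ℝ}
    (ht : t ∈ Icc 0 1) {z : κ → E × E} (hz : z ∈ closure (pairShell κ E))
    (h : pairHomotopy R f g (t, z) = 0) (i : κ) : ‖(z i).1‖ = 1 ∧ ‖(z i).2‖ = 1 :=
  norm_eq_one_of_coincidenceHomotopy_eq_zero hR ht (norm_eq_of_mem_sphere _)
    (norm_eq_of_mem_sphere _) (ne_zero_of_mem_closure_pairShell hz i).1 (congrFun h i)

end NormedSpace

variable [InnerProductSpace ℝ E]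

theorem contDiff_coincidenceEnd {n : WithTop ℕ∞} (T : E →L[ℝ] E) :
    ContDiff ℝ n (coincidenceEnd T) :=
  (contDiff_fst.sub contDiff_snd).prodMk <|
    (T.contDiff.comp contDiff_fst).sub ((contDiff_fst.norm_sq ℝ).smul contDiff_snd)

theorem hasFDerivAt_coincidenceEnd {T : E →L[ℝ] E} {u : E} (hu : ‖u‖ = 1)
    (hT : ∀ v, T v = (2 * ⟪u, v⟫_ℝ) • u - v) :
    HasFDerivAt (coincidenceEnd T) (coincidenceEndDeriv E) (u, u) := by
  have hfst := hasFDerivAt_fst (𝕜 := ℝ) (p := (u, u))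
  have hsnd := hasFDerivAt_snd (𝕜 := ℝ) (p := (u, u))
  refine ((hfst.sub hsnd).prodMk ((T.hasFDerivAt.comp _ hfst).sub
    (hfst.norm_sq.smul hsnd))).congr_fderiv ?_
  ext v <;> simp [coincidenceEndDeriv, hT, hu]

theorem hasFDerivAt_coincidenceEnd_pi {κ : Type*} [Finite κ] {T : E →L[ℝ] E}
    (hT : ∀ v, ‖T v‖ = ‖v‖)
    (hTfix : ∀ u, ‖u‖ = 1 → T u = u → ∀ v, T v = (2 * ⟪u, v⟫_ℝ) • u - v) {z : κ → E × E}
    (hz : ∀ i, (z i).1 ≠ 0) (h : ∀ i, coincidenceEnd T (z i) = 0) :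
    HasFDerivAt (fun (w : κ → E × E) i => coincidenceEnd T (w i))
      (.pi fun i => (coincidenceEndDeriv E).comp (.proj i)) z := by
  cases nonempty_fintype κ
  refine hasFDerivAt_pi.2 fun i => ?_
  obtain ⟨hnorm, heq, hfix⟩ := eq_of_coincidenceEnd_eq_zero hT (hz i) (h i)
  have hzi : z i = ((z i).1, (z i).1) := Prod.ext rfl heq
  have hend : HasFDerivAt (coincidenceEnd T) (coincidenceEndDeriv E) (z i) := by
    rw [hzi]
    exact hasFDerivAt_coincidenceEnd hnorm (hTfix _ hnorm hfix)
  exact hend.comp z (hasFDerivAt_apply (𝕜 := ℝ) i z)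

theorem det_coincidenceEndDeriv_pi_ne_zero (κ : Type*) [Finite κ] [FiniteDimensional ℝ E] :
    (ContinuousLinearMap.pi fun i : κ => (coincidenceEndDeriv E).comp (.proj i)).det ≠ 0 := by
  rw [ContinuousLinearMap.det, Ne, LinearMap.det_eq_zero_iff_ker_ne_bot, not_not,
    LinearMap.ker_eq_bot]
  exact fun v w hvw => funext fun i => injective_coincidenceEndDeriv (congrFun hvw i)

theorem exists_coincidence_of_halfTurn {κ : Type*} [Finite κ] [Nontrivial E]
    [FiniteDimensional ℝ E] {R : ℝ → E →L[ℝ] E} (hR : Continuous R)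
    (hR0 : R 0 = .id ℝ E) (hRn : ∀ t v, ‖R t v‖ = ‖v‖) (hR1 : ∃ u, ‖u‖ = 1 ∧ R 1 u = u)
    (hRfix : ∀ u, ‖u‖ = 1 → R 1 u = u → ∀ v, R 1 v = (2 * ⟪u, v⟫_ℝ) • u - v)
    {f g : κ → I × (κ → sphere (0 : E) 1 × sphere (0 : E) 1) → sphere (0 : E) 1}
    (hf : ∀ i, Continuous (f i)) (hg : ∀ i, Continuous (g i))
    (hf1 : ∀ i y, f i (1, y) = (y i).1) (hg1 : ∀ i y, g i (1, y) = (y i).1) :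
    ∃ y, ∀ i, f i (0, y) = (y i).2 ∧ g i (0, y) = (y i).2 := by
  cases nonempty_fintype κ
  obtain ⟨u, hu, hRu⟩ := hR1
  have hne {z : κ → E × E} (hz : z ∈ closure (pairShell κ E)) (i : κ) : (z i).1 ≠ 0 :=
    (ne_zero_of_mem_closure_pairShell hz i).1
  obtain ⟨z, hz, hHz⟩ := exists_zero_of_homotopy (D := pairShell κ E)
    (Q := fun z i => coincidenceEnd (R 1) (z i)) (x₀ := fun _ => (u, u)) isOpen_pairShell
    isBounded_pairShell (continuousOn_pairHomotopy hR hf hg)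
    (fun t ht z hz h => hz.2 <| isOpen_pairShell.interior_eq.superset <|
      mem_pairShell_of_norm_eq_one
        (norm_eq_one_of_pairHomotopy_eq_zero hRn ht hz.1 h))
    (contDiff_pi.2 fun i => (contDiff_coincidenceEnd _).comp (contDiff_apply ℝ (E × E) i))
    (fun z hz => funext fun i => by
      have hI : projIcc (0 : ℝ) 1 zero_le_one 1 = 1 := projIcc_right _
      simp only [pairHomotopy, hI, hf1, hg1]
      exact coincidenceHomotopy_one R (hne hz i))
    (fun z hz h => by
      rw [(hasFDerivAt_coincidenceEnd_pi (hRn 1) hRfix (hne hz) (congrFun h)).fderiv]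
      -- The derivative is the same at all zeros, so its determinant can serve as the sign.
      exact mul_self_pos.2 (det_coincidenceEndDeriv_pi_ne_zero κ))
    (mem_pairShell_of_norm_eq_one fun _ => ⟨hu, hu⟩)
    (funext fun _ => by simp [coincidenceEnd, hu, hRu])
  have hnorm := norm_eq_one_of_pairHomotopy_eq_zero hRn (by simp) hz hHz
  refine ⟨toSpherePair z, fun i => ?_⟩
  have hz₂ : ((toSpherePair z i).2 : E) = (z i).2 := by
    simp [toSpherePair, coe_toSphere (ne_zero_of_mem_closure_pairShell hz i).2, hnorm i]
  obtain ⟨hfz, hgz⟩ := eq_of_coincidenceHomotopy_zero_eq_zero hR0 (hnorm i).1 (congrFun hHz i)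
  have hI : projIcc (0 : ℝ) 1 zero_le_one 0 = 0 := projIcc_left _
  rw [hI] at hfz hgz
  exact ⟨Subtype.ext (hfz.trans hz₂.symm), Subtype.ext (hgz.trans hz₂.symm)⟩

end Coincidence

theorem exists_antipodal_coincidence {κ : Type*} [Finite κ] {m : ℕ} (hm : Even m)
    {f g : κ → I × (κ → Sph m × Sph m) → Sph m} (hf : ∀ i, Continuous (f i))
    (hg : ∀ i, Continuous (g i)) (hf0 : ∀ i y, f i (0, y) = (y i).1)
    (hg0 : ∀ i y, g i (0, y) = (y i).1) :
    ∃ y, ∀ i, f i (1, y) = -(y i).2 ∧ g i (1, y) = -(y i).2 := by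
  obtain ⟨R, hR, hR0, hRn, hR1, hRfix⟩ := exists_norm_preserving_homotopy_to_halfTurn hm
  let negSnd (y : κ → Sph m × Sph m) (i : κ) : Sph m × Sph m := ((y i).1, -(y i).2)
  have hflip : Continuous fun p : I × (κ → Sph m × Sph m) =>
      (unitInterval.symm p.1, negSnd p.2) := by fun_prop
  obtain ⟨y, hy⟩ := exists_coincidence_of_halfTurn hR hR0 hRn hR1 hRfix
    (fun i => (hf i).comp hflip) (fun i => (hg i).comp hflip)
    (fun i y => by simp [hf0, negSnd]) (fun i y => by simp [hg0, negSnd])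
  exact ⟨negSnd y, fun i => by simpa [negSnd] using hy i⟩

section LowerBound

open scoped Classical in
/-- The homotopy `h` on `U`, with its time parameter slowed down by the factor `r y` and extended by
`c` outside `U`. -/
def cutoffHomotopy {Y Z : Type*} (U : Set Y) (h : U × I → Z) (c : Y → Z) (r : Y → ℝ)
    (p : I × Y) : Z :=
  if hy : p.2 ∈ U then h (⟨p.2, hy⟩, projIcc 0 1 zero_le_one (p.1 * r p.2)) else c p.2

section CutoffHomotopy

variable {Y Z : Type*} {U : Set Y} {h : U × I → Z} {c : Y → Z} {r : Y → ℝ}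

theorem cutoffHomotopy_of_mul_eq_zero (h0 : ∀ y, h (y, 0) = c y) {p : I × Y}
    (hp : (p.1 : ℝ) * r p.2 = 0) : cutoffHomotopy U h c r p = c p.2 := by
  unfold cutoffHomotopy
  split_ifs with hy
  · rw [hp, projIcc_left]
    exact h0 ⟨p.2, hy⟩
  · rfl

theorem cutoffHomotopy_one {y : Y} (hy : y ∈ U) (hr : r y = 1) :
    cutoffHomotopy U h c r (1, y) = h (⟨y, hy⟩, 1) := by
  simp [cutoffHomotopy, hy, hr]

variable [TopologicalSpace Y] [TopologicalSpace Z]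

theorem continuous_cutoffHomotopy (hU : IsOpen U) (hh : Continuous h) (hc : Continuous c)
    (hr : Continuous r) (hrU : tsupport r ⊆ U) (h0 : ∀ y, h (y, 0) = c y) :
    Continuous (cutoffHomotopy U h c r) := by
  refine continuous_iff_continuousAt.2 fun p => ?_
  by_cases hp : p.2 ∈ U
  · refine ContinuousOn.continuousAt (s := Prod.snd ⁻¹' U) ?_
      ((hU.preimage continuous_snd).mem_nhds hp)
    rw [continuousOn_iff_continuous_domRestrict]
    have hpoint : Continuous fun q : Prod.snd (α := I) ⁻¹' U =>
        ((⟨q.1.2, q.2⟩, projIcc 0 1 zero_le_one (q.1.1 * r q.1.2)) : U × I) :=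
      ((continuous_snd.comp continuous_subtype_val).subtype_mk _).prodMk
        (continuous_projIcc.comp (by fun_prop))
    exact (hh.comp hpoint).congr fun q => by
      rw [domRestrict_apply, cutoffHomotopy, dif_pos (mem_preimage.1 q.2), Function.comp_apply]
  · refine (hc.comp continuous_snd).continuousAt.congr ?_
    filter_upwards [((isClosed_tsupport r).isOpen_compl.preimage continuous_snd).mem_nhds
      fun hmem => hp (hrU hmem)] with q hq
    exact (cutoffHomotopy_of_mul_eq_zero h0
      (by rw [image_eq_zero_of_notMem_tsupport hq, mul_zero])).symm

theorem exists_homotopies_of_isOpen_cover [NormalSpace Y] [ParacompactSpace Y] {ι : Type*}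
    {U : ι → Set Y} (hU : ∀ k, IsOpen (U k)) (hcover : ⋃ k, U k = univ) {h : ∀ k, U k × I → Z}
    (hh : ∀ k, Continuous (h k)) {c : ι → Y → Z} (hc : ∀ k, Continuous (c k))
    (h0 : ∀ k y, h k (y, 0) = c k y) :
    ∃ F : ι → I × Y → Z, (∀ k, Continuous (F k)) ∧ (∀ k y, F k (0, y) = c k y) ∧
      ∀ y, ∃ k, ∃ hy : y ∈ U k, F k (1, y) = h k (⟨y, hy⟩, 1) := by
  obtain ⟨ρ, hρ⟩ := BumpCovering.exists_isSubordinate isClosed_univ U hU hcover.superset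
  refine ⟨fun k => cutoffHomotopy (U k) (h k) (c k) (ρ k), fun k =>
    continuous_cutoffHomotopy (hU k) (hh k) (hc k) (ρ k).continuous (hρ k) (h0 k),
    fun k y => cutoffHomotopy_of_mul_eq_zero (h0 k) (by simp), fun y => ?_⟩
  have hone : ρ (ρ.ind y (mem_univ y)) y = 1 := (ρ.eventuallyEq_one y (mem_univ y)).eq_of_nhds
  have hy : y ∈ U (ρ.ind y (mem_univ y)) := hρ _ (subset_tsupport _ (by simp [hone]))
  exact ⟨_, hy, cutoffHomotopy_one hy hone⟩

end CutoffHomotopy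

variable {κ : Type*} [Fintype κ] {m : ℕ}

theorem two_mul_card_lt_card_of_isOpen_cover (hm : Even m) {ι : Type*} [Fintype ι]
    {U : ι → Set (κ → Sph m × Sph m)} (hU : ∀ k, IsOpen (U k)) (hcover : ⋃ k, U k = univ)
    {h : ∀ k, κ → U k × I → Sph m} (hh : ∀ k i, Continuous (h k i))
    (h0 : ∀ k i y, h k i (y, 0) = (y.1 i).1) (h1 : ∀ k i y, h k i (y, 1) = (y.1 i).2) :
    2 * Fintype.card κ < Fintype.card ι := by
  by_contra! hcard
  have : Nonempty (Sph m) := (NormedSpace.sphere_nonempty.2 zero_le_one).to_subtype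
  have : Nonempty ι := by
    obtain ⟨k, -⟩ := mem_iUnion.1 (hcover.superset (mem_univ (Classical.arbitrary _)))
    exact ⟨k⟩
  obtain ⟨π, hπ⟩ : ∃ π : κ ⊕ κ → ι, Function.Surjective π := by
    obtain ⟨j⟩ := Function.Embedding.nonempty_of_card_le (α := ι) (β := κ ⊕ κ)
      (by rwa [Fintype.card_sum, ← two_mul])
    exact ⟨_, Function.invFun_surjective j.injective⟩
  obtain ⟨F, hF, hF0, hF1⟩ := exists_homotopies_of_isOpen_cover (fun k => hU (π k))
    (by rwa [hπ.iUnion_comp]) (fun k : κ ⊕ κ => hh (π k) (k.elim id id))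
    (fun k => continuous_fst.comp (continuous_apply (k.elim id id))) (fun k => h0 (π k) _)
  obtain ⟨y, hy⟩ := exists_antipodal_coincidence hm (fun i => hF (.inl i)) (fun i => hF (.inr i))
    (fun i => hF0 (.inl i)) (fun i => hF0 (.inr i))
  obtain ⟨k, hyU, hk⟩ := hF1 y
  have hend : F k (1, y) = -(y (k.elim id id)).2 := by
    cases k with
    | inl i => exact (hy i).1
    | inr i => exact (hy i).2
  rw [hk, h1] at hend
  exact ne_neg_of_mem_unit_sphere ℝ _ hend

theorem hasPlanners_of_hasBidirPlanners {X : Type*} [TopologicalSpace X] {n k : ℕ}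
    (h : HasBidirPlanners X n k) : HasPlanners X n k := by
  obtain ⟨U, hU, hcover, -, hs⟩ := h
  exact ⟨U, hU, hcover, fun i => (hs i).imp fun _ hs => hs.1⟩

theorem two_mul_card_mul_card_lt_of_hasPlanners (hm : Even m) {ι : Type*} [Fintype ι] {n k : ℕ}
    (e : Fin n ≃ ι ⊕ ι) (h : HasPlanners (κ → Sph m) n k) :
    2 * (Fintype.card κ * Fintype.card ι) < k := by
  obtain ⟨U, hU, hcover, hs⟩ := h
  choose s hs using hs
  let φ (y : κ × ι → Sph m × Sph m) (j : Fin n) (i : κ) : Sph m :=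
    (e j).elim (fun a => (y (i, a)).1) fun a => (y (i, a)).2
  have hφ : Continuous φ := by
    refine continuous_pi fun j => continuous_pi fun i => ?_
    cases h : e j <;> simp only [φ, h, Sum.elim_inl, Sum.elim_inr] <;> fun_prop
  have : PathConnectedSpace I :=
    isPathConnected_iff_pathConnectedSpace.1 ((convex_Icc 0 1).isPathConnected ⟨0, by simp⟩)
  let q (a : ι) : Path (evalPt n (e.symm (.inl a))) (evalPt n (e.symm (.inr a))) :=
    PathConnectedSpace.somePath _ _
  have hcard := two_mul_card_lt_card_of_isOpen_cover hm (U := fun k => φ ⁻¹' U k)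
    (h := fun k i p => s k ⟨φ p.1.1, p.1.2⟩ (q i.2 p.2) i.1) (fun k => (hU k).preimage hφ)
    (by rw [← preimage_iUnion, hcover, preimage_univ]) (fun k i => ?_)
    (fun k i y => by simp [hs, φ]) (fun k i y => by simp [hs, φ])
  · rwa [Fintype.card_prod, Fintype.card_fin] at hcard
  · have hmem : Continuous fun p : (φ ⁻¹' U k) × I => (⟨φ p.1.1, p.1.2⟩ : U k) := by fun_prop
    exact (continuous_apply i.1).comp
      (((s k).continuous.comp hmem).eval ((q i.2).continuous.comp continuous_snd))

end LowerBound

section Concatenation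

variable {X : Type*} {n : ℕ}

/-- The distance from `t` to the `j`-th evaluation point, rescaled so as to be `1` halfway to the
next one and truncated at `1`. -/
def timeTo (n : ℕ) (j : Fin n) (t : I) : I :=
  projIcc 0 1 zero_le_one (2 * |(t : ℝ) * (n - 1) - j|)

theorem continuous_timeTo (n : ℕ) (j : Fin n) : Continuous (timeTo n j) :=
  continuous_projIcc.comp (by fun_prop)

theorem timeTo_eq_one {j : Fin n} {t : I} (h : 1 / 2 ≤ |(t : ℝ) * (n - 1) - j|) :
    timeTo n j t = 1 :=
  projIcc_of_right_le _ (by linarith)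

theorem abs_evalPt_mul_sub (j : Fin n) : |(evalPt n j : ℝ) * (n - 1) - j| = 0 := by
  rw [abs_eq_zero, sub_eq_zero, evalPt]
  refine div_mul_cancel_of_imp fun hn => ?_
  have hn1 : n = 1 := by exact_mod_cast sub_eq_zero.1 hn
  subst hn1
  simp

theorem timeTo_evalPt (j : Fin n) : timeTo n j (evalPt n j) = 0 := by
  rw [timeTo, abs_evalPt_mul_sub, mul_zero]
  exact projIcc_left _

theorem abs_symm_mul_sub_rev (j : Fin n) (t : I) :
    |(unitInterval.symm t : ℝ) * (n - 1) - j.rev| = |(t : ℝ) * (n - 1) - j| := by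
  rw [Fin.val_rev, unitInterval.coe_symm_eq, ← abs_neg, Nat.cast_sub (by omega)]
  push_cast
  ring_nf

theorem timeTo_rev_symm (j : Fin n) (t : I) :
    timeTo n j.rev (unitInterval.symm t) = timeTo n j t := by
  rw [timeTo, timeTo, abs_symm_mul_sub_rev]

theorem one_half_le_abs_sub_of_ne {i j : Fin n} (hij : i ≠ j) {s : ℝ} (h : |s - j| ≤ 1 / 2) :
    1 / 2 ≤ |s - i| := by
  have hdist : (1 : ℝ) ≤ |(i : ℝ) - j| := by
    have hne : (i : ℤ) - j ≠ 0 := sub_ne_zero.2 (by exact_mod_cast Fin.val_ne_of_ne hij)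
    exact_mod_cast Int.one_le_abs hne
  linarith [abs_sub_le (i : ℝ) s j, abs_sub_comm (i : ℝ) s]

variable [NeZero n]

theorem exists_abs_mul_sub_le (n : ℕ) [NeZero n] (t : I) :
    ∃ j : Fin n, |(t : ℝ) * (n - 1) - j| ≤ 1 / 2 := by
  have hn : (1 : ℝ) ≤ n := by exact_mod_cast NeZero.one_le (n := n)
  have ht : 0 ≤ (t : ℝ) * (n - 1) := mul_nonneg t.2.1 (by linarith)
  have htn : (t : ℝ) * (n - 1) ≤ n - 1 := mul_le_of_le_one_left (by linarith) t.2.2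
  have hfloor := Nat.floor_le (a := (t : ℝ) * (n - 1) + 1 / 2) (by linarith)
  have hlt := Nat.lt_floor_add_one ((t : ℝ) * (n - 1) + 1 / 2)
  refine ⟨⟨⌊(t : ℝ) * (n - 1) + 1 / 2⌋₊, ?_⟩, abs_le.2 ⟨?_, ?_⟩⟩
  · have : (⌊(t : ℝ) * (n - 1) + 1 / 2⌋₊ : ℝ) < n := by linarith
    exact_mod_cast this
  all_goals dsimp only; linarith

/-- The path that leaves the `j`-th evaluation point along `a j` in both time directions and reaches
the end of `a j` halfway to the neighbouring evaluation points. It is meant for `a j` with a common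
end, in which case the chosen index does not matter, see `concat_eq`. -/
def concat (a : Fin n → I → X) (t : I) : X :=
  a (exists_abs_mul_sub_le n t).choose (timeTo n (exists_abs_mul_sub_le n t).choose t)

theorem concat_eq {a : Fin n → I → X} {b : X} (ha : ∀ j, a j 1 = b) {t : I} {j : Fin n}
    (h : |(t : ℝ) * (n - 1) - j| ≤ 1 / 2) : concat a t = a j (timeTo n j t) := by
  have hspec := (exists_abs_mul_sub_le n t).choose_spec
  unfold concat
  set i := (exists_abs_mul_sub_le n t).choose
  obtain hij | hij := eq_or_ne i j
  · rw [hij]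
  · rw [timeTo_eq_one (one_half_le_abs_sub_of_ne hij h),
      timeTo_eq_one (one_half_le_abs_sub_of_ne hij.symm hspec), ha, ha]

theorem concat_evalPt {a : Fin n → I → X} {b : X} (ha : ∀ j, a j 1 = b) (j : Fin n) :
    concat a (evalPt n j) = a j 0 := by
  rw [concat_eq ha (j := j) (by rw [abs_evalPt_mul_sub]; norm_num), timeTo_evalPt]

theorem concat_symm {a : Fin n → I → X} {b : X} (ha : ∀ j, a j 1 = b) (t : I) :
    concat a (unitInterval.symm t) = concat (rtuple a) t := by
  obtain ⟨j, hj⟩ := exists_abs_mul_sub_le n t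
  rw [concat_eq ha (j := j.rev) (by rwa [abs_symm_mul_sub_rev]), timeTo_rev_symm]
  exact (concat_eq (a := rtuple a) (fun j => ha j.rev) hj).symm

variable [TopologicalSpace X]

theorem continuous_concat {W : Type*} [TopologicalSpace W] {a : W → Fin n → I → X} {b : X}
    (ha : ∀ j, Continuous fun p : W × I => a p.1 j p.2) (ha1 : ∀ w j, a w j 1 = b) :
    Continuous fun p : W × I => concat (a p.1) p.2 := by
  refine (locallyFinite_of_finite fun j : Fin n =>
    {p : W × I | |(p.2 : ℝ) * (n - 1) - j| ≤ 1 / 2}).continuous ?_ (fun j => ?_) fun j => ?_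
  · exact iUnion_eq_univ_iff.2 fun p => exists_abs_mul_sub_le n p.2
  · exact isClosed_le (by fun_prop) continuous_const
  · refine ((ha j).comp (continuous_fst.prodMk
      ((continuous_timeTo n j).comp continuous_snd))).continuousOn.congr fun p hp => ?_
    exact concat_eq (ha1 p.1) hp

theorem hasBidirPlanners_of_nullhomotopies {k : ℕ} {b : X} {U : Fin k → Set (Fin n → X)}
    (hU : ∀ i, IsOpen (U i)) (hcover : ⋃ i, U i = univ) (hrev : ∀ i, ∀ x ∈ U i, rtuple x ∈ U i)
    {h : ∀ i, U i × I → Fin n → X} (hh : ∀ i, Continuous (h i)) (h0 : ∀ i x, h i (x, 0) = x)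
    (h1 : ∀ i x j, h i (x, 1) j = b)
    (hhrev : ∀ i (x : U i) (hx : rtuple x.1 ∈ U i) t, h i (⟨_, hx⟩, t) = rtuple (h i (x, t))) :
    HasBidirPlanners X n k := by
  refine ⟨U, hU, hcover, hrev, fun i => ?_⟩
  let a (x : U i) (j : Fin n) (t : I) : X := h i (x, t) j
  let s : C(U i × I, X) := ⟨fun p => concat (a p.1) p.2,
    continuous_concat (fun j => (continuous_apply j).comp (hh i)) (h1 i)⟩
  refine ⟨s.curry, fun x j => ?_, fun x hx => ?_⟩
  · exact (concat_evalPt (a := a x) (h1 i x) j).trans (congrFun (h0 i x) j)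
  · ext t
    have ha : a ⟨rtuple x.1, hx⟩ = rtuple (a x) :=
      funext fun j => funext fun t => congrFun (hhrev i x hx t) j
    calc concat (a ⟨rtuple x.1, hx⟩) t = concat (rtuple (a x)) t := by rw [ha]
      _ = concat (a x) (unitInterval.symm t) := (concat_symm (h1 i x) t).symm

end Concatenation

section Contraction

variable {E : Type*} [NormedAddCommGroup E] [NormedSpace ℝ E] {a b : sphere (0 : E) 1}

theorem segment_ne_zero {x y : sphere (0 : E) 1} (h : x ≠ -y) {s : ℝ} (hs : s ∈ Icc 0 1) :
    (1 - s) • (x : E) + s • (y : E) ≠ 0 := fun h0 => by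
  have hneg : (1 - s) • (x : E) = s • -(y : E) := by
    rw [smul_neg]
    exact eq_neg_of_add_eq_zero_left h0
  have hs' : 1 - s = s := by
    simpa [norm_smul, abs_of_nonneg hs.1, abs_of_nonneg (sub_nonneg.2 hs.2)] using
      congrArg norm hneg
  rw [hs'] at hneg
  exact h (Subtype.ext (smul_right_injective E (by linarith : s ≠ 0) hneg))

variable [Nontrivial E]

/-- The motion of `x` along the great circle arc to the start of `q`, followed by `q`. -/
def moveAlong (q : Path a b) (p : sphere (0 : E) 1 × I) : sphere (0 : E) 1 :=
  toSphere ((1 - min 1 (2 * (p.2 : ℝ))) • (p.1 : E) +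
    min 1 (2 * (p.2 : ℝ)) • (q.extend (2 * p.2 - 1) : E))

theorem moveAlong_zero (q : Path a b) (x : sphere (0 : E) 1) : moveAlong q (x, 0) = x := by
  simp [moveAlong, toSphere_coe]

theorem moveAlong_one (q : Path a b) (x : sphere (0 : E) 1) : moveAlong q (x, 1) = b := by
  norm_num [moveAlong, toSphere_coe]

theorem continuousOn_moveAlong (q : Path a b) : ContinuousOn (moveAlong q) {p | p.1 ≠ -a} := by
  refine continuousOn_toSphere.comp (f := fun p : sphere (0 : E) 1 × I =>
    (1 - min 1 (2 * (p.2 : ℝ))) • (p.1 : E) +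
      min 1 (2 * (p.2 : ℝ)) • (q.extend (2 * p.2 - 1) : E)) ?_ fun p hp => ?_
  · exact Continuous.continuousOn (by fun_prop)
  · change _ ≠ _
    dsimp only
    obtain ht | ht := le_total (2 * (p.2 : ℝ)) 1
    · rw [q.extend_of_le_zero (by linarith)]
      exact segment_ne_zero hp ⟨le_min zero_le_one (by linarith [p.2.2.1]), min_le_left _ _⟩
    · simpa [min_eq_left ht] using ne_zero_of_mem_unit_sphere (q.extend (2 * p.2 - 1))

end Contraction

section Strata

variable {E : Type*} [NormedAddCommGroup E] [InnerProductSpace ℝ E] {η : Type*}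
  {b : sphere (0 : E) 1} {J : Finset η} {k : ℕ} {x : η → sphere (0 : E) 1}

/-- The configurations on the sphere whose points with index in `J` lie, in the direction of `b`,
strictly below all the others, and such that no point in the lower group is `b` and none in the
upper group is `-b`. -/
def stratum (b : sphere (0 : E) 1) (J : Finset η) : Set (η → sphere (0 : E) 1) :=
  {x | (∀ i ∈ J, ∀ j ∉ J, ⟪(b : E), x i⟫_ℝ < ⟪(b : E), x j⟫_ℝ) ∧ (∀ i ∈ J, x i ≠ b) ∧
    ∀ j ∉ J, x j ≠ -b}

/-- The union of the strata with `k` points in the lower group. -/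
def strata (η : Type*) (b : sphere (0 : E) 1) (k : ℕ) : Set (η → sphere (0 : E) 1) :=
  ⋃ (J : Finset η) (_ : J.card = k), stratum b J

theorem mem_strata : x ∈ strata η b k ↔ ∃ J : Finset η, J.card = k ∧ x ∈ stratum b J := by
  simp [strata]

theorem isOpen_stratum [Finite η] : IsOpen (stratum b J) := by
  have hc (i : η) : Continuous fun x : η → sphere (0 : E) 1 => ⟪(b : E), x i⟫_ℝ := by fun_prop
  simp only [stratum, Set.ofPred_and, Set.ofPred_forall]
  refine .inter (isOpen_iInter_of_finite fun i => isOpen_iInter_of_finite fun _ =>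
    isOpen_iInter_of_finite fun j => isOpen_iInter_of_finite fun _ => isOpen_lt (hc i) (hc j))
    (.inter ?_ ?_) <;>
  exact isOpen_iInter_of_finite fun i => isOpen_iInter_of_finite fun _ =>
    isOpen_ne_fun (continuous_apply i) continuous_const

theorem isOpen_strata [Finite η] : IsOpen (strata η b k) :=
  isOpen_iUnion fun _ => isOpen_iUnion fun _ => isOpen_stratum

theorem eq_of_mem_stratum {J' : Finset η} (hJ : x ∈ stratum b J) (hJ' : x ∈ stratum b J')
    (hcard : J.card = J'.card) : J = J' := by
  by_contra hne
  obtain ⟨i, hi, hi'⟩ := Finset.not_subset.1 fun h =>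
    hne (Finset.eq_of_subset_of_card_le h hcard.ge)
  obtain ⟨j, hj, hj'⟩ := Finset.not_subset.1 fun h =>
    hne (Finset.eq_of_subset_of_card_le h hcard.le).symm
  exact lt_asymm (hJ.1 i hi j hj') (hJ'.1 j hj i hi')

theorem mem_stratum_map (τ : Equiv.Perm η) :
    x ∈ stratum b (J.map τ.toEmbedding) ↔ x ∘ τ ∈ stratum b J := by
  simp only [stratum, mem_ofPred_eq, Finset.mem_map_equiv, Function.comp_apply,
    ← τ.forall_congr_right (q := fun i => τ.symm i ∈ J → _),
    ← τ.forall_congr_right (q := fun i => τ.symm i ∉ J → _), Equiv.symm_apply_apply]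

theorem exists_mem_strata [Fintype η] (b : sphere (0 : E) 1) (x : η → sphere (0 : E) 1) :
    ∃ k < Fintype.card η + 1, x ∈ strata η b k := by
  classical
  have hb : ⟪(b : E), b⟫_ℝ = 1 := by simp
  let J := Finset.univ.filter fun i => ⟪(b : E), x i⟫_ℝ < 0
  refine ⟨J.card, Nat.lt_succ_of_le J.card_le_univ, mem_strata.2 ⟨J, rfl, ?_, ?_, ?_⟩⟩
  · intro i hi j hj
    simp only [J, Finset.mem_filter_univ, not_lt] at hi hj
    exact hi.trans_le hj
  · rintro i hi h
    simp only [J, Finset.mem_filter_univ, h, hb] at hi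
    linarith
  · rintro i hi h
    simp only [J, Finset.mem_filter_univ, h, coe_neg_sphere, inner_neg_right, hb] at hi
    linarith

/-- The indices of the `k` points of `x` in the lower group, empty if `x` is not in `strata`. -/
def lowerGroup (b : sphere (0 : E) 1) (k : ℕ) (x : η → sphere (0 : E) 1) : Set η :=
  ⋃ (J : Finset η) (_ : J.card = k ∧ x ∈ stratum b J), J

theorem mem_lowerGroup {j : η} :
    j ∈ lowerGroup b k x ↔ ∃ J : Finset η, (J.card = k ∧ x ∈ stratum b J) ∧ j ∈ J := by
  simp [lowerGroup]

theorem lowerGroup_card_eq (hx : x ∈ stratum b J) : lowerGroup b J.card x = J := by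
  ext j
  refine mem_lowerGroup.trans ⟨?_, fun hj => ⟨J, ⟨rfl, hx⟩, hj⟩⟩
  rintro ⟨J', ⟨hcard, hx'⟩, hj⟩
  rwa [eq_of_mem_stratum hx hx' hcard.symm]

theorem mem_strata_comp (τ : Equiv.Perm η) : x ∘ τ ∈ strata η b k ↔ x ∈ strata η b k := by
  simp only [mem_strata, ← mem_stratum_map]
  exact τ.finsetCongr.exists_congr fun J => by simp

theorem mem_lowerGroup_comp (τ : Equiv.Perm η) {j : η} :
    j ∈ lowerGroup b k (x ∘ τ) ↔ τ j ∈ lowerGroup b k x := by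
  simp only [mem_lowerGroup, ← mem_stratum_map]
  exact τ.finsetCongr.exists_congr fun J => by simp

variable [Nontrivial E]

open scoped Classical in
/-- The motion of all points to `b`: those of the upper group along great circles, those of the
lower group first to `-b` and then along `q`. -/
def strataMotion (q : Path (-b) b) (k : ℕ) (p : (η → sphere (0 : E) 1) × I) (j : η) :
    sphere (0 : E) 1 :=
  if j ∈ lowerGroup b k p.1 then moveAlong q (p.1 j, p.2) else moveAlong (.refl b) (p.1 j, p.2)

theorem strataMotion_zero (q : Path (-b) b) (k : ℕ) (x : η → sphere (0 : E) 1) :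
    strataMotion q k (x, 0) = x := by
  ext1 j
  simp only [strataMotion, moveAlong_zero, ite_self]

theorem strataMotion_one (q : Path (-b) b) (k : ℕ) (x : η → sphere (0 : E) 1) (j : η) :
    strataMotion q k (x, 1) j = b := by
  simp only [strataMotion, moveAlong_one, ite_self]

theorem strataMotion_comp (q : Path (-b) b) (k : ℕ) (x : η → sphere (0 : E) 1) (t : I)
    (τ : Equiv.Perm η) : strataMotion q k (x ∘ τ, t) = strataMotion q k (x, t) ∘ τ := by
  classical
  exact funext fun j => if_congr (mem_lowerGroup_comp τ) rfl rfl

theorem continuousOn_strataMotion [Finite η] (q : Path (-b) b) :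
    ContinuousOn (strataMotion q k) (strata η b k ×ˢ univ) := by
  rintro ⟨x, t⟩ ⟨hx, -⟩
  obtain ⟨J, rfl, hxJ⟩ := mem_strata.1 hx
  refine (ContinuousOn.continuousAt (s := stratum b J ×ˢ univ) ?_
    ((isOpen_stratum.prod isOpen_univ).mem_nhds ⟨hxJ, mem_univ t⟩)).continuousWithinAt
  refine continuousOn_pi.2 fun j => ?_
  have hj : ContinuousOn (fun p : (η → sphere (0 : E) 1) × I => (p.1 j, p.2))
    (stratum b J ×ˢ univ) := by fun_prop
  by_cases hjJ : j ∈ J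
  · refine ((continuousOn_moveAlong q).comp hj fun p hp => ?_).congr fun p hp => ?_
    · simpa using hp.1.2.1 j hjJ
    · simp [strataMotion, lowerGroup_card_eq hp.1, hjJ]
  · refine ((continuousOn_moveAlong (.refl b)).comp hj fun p hp => ?_).congr fun p hp => ?_
    · exact hp.1.2.2 j hjJ
    · simp [strataMotion, lowerGroup_card_eq hp.1, hjJ]

theorem hasBidirPlanners_sphere_pow (hE : 1 < Module.rank ℝ E) (κ : Type*) [Fintype κ] (n : ℕ)
    [NeZero n] : HasBidirPlanners (κ → sphere (0 : E) 1) n (n * Fintype.card κ + 1) := by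
  obtain ⟨b⟩ : Nonempty (sphere (0 : E) 1) :=
    (NormedSpace.sphere_nonempty.2 zero_le_one).to_subtype
  have := isPathConnected_iff_pathConnectedSpace.1 (isPathConnected_sphere hE 0 zero_le_one)
  let q : Path (-b) b := PathConnectedSpace.somePath _ _
  let τ : Equiv.Perm (Fin n × κ) := Fin.revPerm.prodCongr (.refl κ)
  let U (k : ℕ) : Set (Fin n → κ → sphere (0 : E) 1) := Function.uncurry ⁻¹' strata (Fin n × κ) b k
  refine hasBidirPlanners_of_nullhomotopies (b := fun _ => b) (U := fun k => U k)
    (h := fun k p i j => strataMotion q k (Function.uncurry p.1.1, p.2) (i, j))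
    (fun k => isOpen_strata.preimage (by fun_prop)) ?_ (fun k x hx => (mem_strata_comp τ).2 hx)
    (fun k => ?_) (fun k x => ?_) (fun k x j => ?_) fun k x hx t => ?_
  · refine iUnion_eq_univ_iff.2 fun x => ?_
    obtain ⟨k, hk, hx⟩ := exists_mem_strata b (Function.uncurry x)
    exact ⟨⟨k, by simpa using hk⟩, hx⟩
  · have hmem : Continuous fun p : U k × I => (Function.uncurry p.1.1, p.2) :=
      (continuous_pi fun ij => (continuous_apply_apply ij.1 ij.2).comp
        (continuous_subtype_val.comp continuous_fst)).prodMk continuous_snd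
    have := (continuousOn_strataMotion q).comp_continuous hmem fun p => ⟨p.1.2, mem_univ _⟩
    exact continuous_pi fun i => continuous_pi fun j => (continuous_apply (i, j)).comp this
  · rw [strataMotion_zero]
    rfl
  · exact funext fun i => strataMotion_one q k _ _
  · funext i j
    exact congrFun (strataMotion_comp q k (Function.uncurry x.1) t τ) (i, j)

end Strata

section TCbeta

variable {X Y : Type*} [TopologicalSpace X] [TopologicalSpace Y] {n N : ℕ}

theorem TCbeta_eq_of_hasBidirPlanners (hu : HasBidirPlanners X n (N + 1))
    (hl : ∀ k, HasBidirPlanners X n k → N < k) : TCbeta X n = ((N + 1 : ℕ) : ℕ∞) := by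
  refine le_antisymm (sInf_le ⟨_, rfl, hu⟩) (le_sInf ?_)
  rintro _ ⟨k, rfl, hk⟩
  exact_mod_cast Nat.succ_le_of_lt (hl k hk)

theorem hasBidirPlanners_of_homeomorph (e : X ≃ₜ Y) {k : ℕ} (h : HasBidirPlanners X n k) :
    HasBidirPlanners Y n k := by
  obtain ⟨U, hU, hcover, hrev, hs⟩ := h
  let φ (y : Fin n → Y) (j : Fin n) : X := e.symm (y j)
  have hφ : Continuous φ := by fun_prop
  refine ⟨fun i => φ ⁻¹' U i, fun i => (hU i).preimage hφ,
    by rw [← preimage_iUnion, hcover, preimage_univ], fun i y hy => hrev i _ hy, fun i => ?_⟩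
  obtain ⟨s, hs, hsrev⟩ := hs i
  let post : C(C(I, X), C(I, Y)) := ⟨(e : C(X, Y)).comp, ContinuousMap.continuous_postcomp _⟩
  refine ⟨post.comp (s.comp ⟨_, hφ.restrictPreimage⟩), fun y j => ?_, fun y hy => ?_⟩
  · simp [post, φ, hs]
  · ext t
    exact congrArg (fun γ : C(I, X) => e (γ t)) (hsrev ⟨φ y.1, y.2⟩ hy)

theorem TCbeta_congr (e : X ≃ₜ Y) : TCbeta X n = TCbeta Y n := by
  have h (k : ℕ) : HasBidirPlanners X n k ↔ HasBidirPlanners Y n k :=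
    ⟨hasBidirPlanners_of_homeomorph e, hasBidirPlanners_of_homeomorph e.symm⟩
  simp only [TCbeta, h]

end TCbeta

end SphereTC

end

open SphereTC in
theorem TCsym2_sphere_pow_and_TCbeta_general {κ : Type*} [Fintype κ] {m p : ℕ} (hm : m ≠ 0)
    (hme : Even m) (hp : p ≠ 0) :
    TCbeta (κ → Sph m) (2 * p) = ((2 * p * Fintype.card κ + 1 : ℕ) : ℕ∞) := by
  have : NeZero (2 * p) := ⟨by omega⟩
  have hrank : 1 < Module.rank ℝ (EuclideanSpace ℝ (Fin (m + 1))) :=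
    Module.lt_rank_of_lt_finrank (by simpa using Nat.pos_of_ne_zero hm)
  refine TCbeta_eq_of_hasBidirPlanners (hasBidirPlanners_sphere_pow hrank κ (2 * p)) fun k hk => ?_
  have hlt := two_mul_card_mul_card_lt_of_hasPlanners hme
    ((finCongr (two_mul p)).trans finSumFinEquiv.symm) (hasPlanners_of_hasBidirPlanners hk)
  rw [Fintype.card_fin] at hlt
  linarith [mul_comm p (Fintype.card κ)]

/-- For every even `m ≥ 2` and every `l ≥ 1`,
`TC^Σ_2((S^m)^l) = 2l + 1` and `TC^β_{2l}(S^m) = 2l + 1`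
(with `TC^Σ_2(Y) = TC^β_2(Y)` the swap-equivariant sectional number of `e_2`). -/
theorem TCsym2_sphere_pow_and_TCbeta (m l : ℕ) (hm : 2 ≤ m) (hme : Even m) (hl : 1 ≤ l) :
    TCbeta (Fin l → Sph m) 2 = ((2 * l + 1 : ℕ) : ℕ∞) ∧
    TCbeta (Sph m) (2 * l) = ((2 * l + 1 : ℕ) : ℕ∞) := by
  have hm0 : m ≠ 0 := by omega
  have hpow := TCsym2_sphere_pow_and_TCbeta_general (κ := Fin l) hm0 hme one_ne_zero
  have hsphere := TCsym2_sphere_pow_and_TCbeta_general (κ := Unit) hm0 hme (p := l) (by omega)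
  rw [SphereTC.TCbeta_congr (Homeomorph.funUnique Unit (Sph m))] at hsphere
  exact ⟨by simpa using hpow, by simpa using hsphere⟩
end

section
/- For every path-connected topological space X, the map c : X → C(I,X)/β, sending a point x to the equivalence class of the constant path at x, is a homotopy equivalence, where C(I,X)/β is the quotient of the free path space by the path-reversal involution (β·γ)(t) = γ(1−t), with the quotient topology. -/
open unitInterval

noncomputable section

/-- The setoid on `C(I,X)` identifying each path with its reverse. -/
def pathRevSetoid (X : Type*) [TopologicalSpace X] : Setoid C(unitInterval, X) where
  r γ δ := γ = δ ∨ γ = rpath δ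
  iseqv := by
    constructor
    · intro γ; exact Or.inl rfl
    · intro γ δ h
      rcases h with h | h
      · exact Or.inl h.symm
      · refine Or.inr ?_
        subst h
        ext t
        simp [rpath]
    · intro γ δ η h1 h2
      rcases h1 with h1 | h1 <;> rcases h2 with h2 | h2
      · exact Or.inl (h1.trans h2)
      · exact Or.inr (h1.trans h2)
      · subst h1 h2; exact Or.inr rfl
      · subst h1 h2
        refine Or.inl ?_
        ext t
        simp [rpath]

/-- The quotient `C(I,X)/β` of the free path space by path reversal. -/
def PathQuot (X : Type*) [TopologicalSpace X] : Type _ := Quotient (pathRevSetoid X)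

instance (X : Type*) [TopologicalSpace X] : TopologicalSpace (PathQuot X) :=
  instTopologicalSpaceQuotient

/-- The setoid on `Y × Y` identifying a pair with its swap. -/
def swapSetoid (Y : Type*) : Setoid (Y × Y) where
  r p q := p = q ∨ p = Prod.swap q
  iseqv := by
    constructor
    · intro p; exact Or.inl rfl
    · intro p q h
      rcases h with h | h
      · exact Or.inl h.symm
      · exact Or.inr (by rw [h, Prod.swap_swap])
    · intro p q u h1 h2
      rcases h1 with h1 | h1 <;> rcases h2 with h2 | h2
      · exact Or.inl (h1.trans h2)
      · exact Or.inr (h1.trans h2)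
      · subst h1 h2; exact Or.inr rfl
      · subst h1 h2; exact Or.inl (Prod.swap_swap _)

/-- The second symmetric product `SP²(Y)`, the quotient of `Y × Y` by the swap involution. -/
def SP2 (Y : Type*) [TopologicalSpace Y] : Type _ := Quotient (swapSetoid Y)

instance (Y : Type*) [TopologicalSpace Y] : TopologicalSpace (SP2 Y) :=
  instTopologicalSpaceQuotient

/-- The map `φ : (X^l)² → X^{2l}`,
`φ(x_1,…,x_{2l}) = (x_l,…,x_1,x_{l+1},…,x_{2l})`. -/
def phiMap {X : Type*} (l : ℕ) (p : (Fin l → X) × (Fin l → X)) : Fin (2 * l) → X :=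
  fun j =>
    if h : (j : ℕ) < l then p.1 ⟨l - 1 - (j : ℕ), by omega⟩
    else p.2 ⟨(j : ℕ) - l, by have := j.isLt; omega⟩

/-- The north pole `N = (0,…,0,1)` of `S^n`. -/
def northPole (n : ℕ) : Sph n :=
  ⟨EuclideanSpace.single (Fin.last n) (1 : ℝ), by
    simp [mem_sphere_zero_iff_norm, EuclideanSpace.norm_single]⟩

/-- The south pole `S = (0,…,0,-1)` of `S^n`. -/
def southPole (n : ℕ) : Sph n :=
  ⟨EuclideanSpace.single (Fin.last n) (-1 : ℝ), by
    simp [mem_sphere_zero_iff_norm, EuclideanSpace.norm_single]⟩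

/-- The open upper hemisphere `D_+ = {x ∈ S^n : x_{n+1} > 0}`. -/
def upperHemi (n : ℕ) : Set (Sph n) :=
  {x | 0 < (x : EuclideanSpace ℝ (Fin (n + 1))) (Fin.last n)}

/-- The open lower hemisphere `D_- = {x ∈ S^n : x_{n+1} < 0}`. -/
def lowerHemi (n : ℕ) : Set (Sph n) :=
  {x | (x : EuclideanSpace ℝ (Fin (n + 1))) (Fin.last n) < 0}

end

/-!
The interval contracts affinely onto its midpoint, and this contraction commutes with the
reflection `t ↦ 1 - t`. Precomposing paths with it deforms every path onto the constant path at its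
midpoint. By equivariance the deformation passes to `C(I,X)/β`, and evaluation at the midpoint, the
fixed point of the reflection, becomes a homotopy inverse of `c`. That the descended deformation is
continuous uses that `I × -` preserves quotient maps, `I` being locally compact.
-/

open ContinuousMap Set.Icc Topology

section Homotopy

variable {X Y Z : Type*} [TopologicalSpace X] [TopologicalSpace Y] [TopologicalSpace Z]

theorem homotopic_of_homotopy_comp_isQuotientMap {q : C(X, Y)} (hq : IsQuotientMap q)
    {f₀ f₁ : C(Y, Z)} (F : (f₀.comp q).Homotopy (f₁.comp q))
    (hF : ∀ s, Function.FactorsThrough (F.curry s) q) : f₀.Homotopic f₁ := by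
  let G : I × Y → Z := fun p ↦ hq.lift (F.curry p.1) (hF p.1) p.2
  have G_apply (s : I) (x : X) : G (s, q x) = F (s, x) :=
    DFunLike.congr_fun (hq.lift_comp (F.curry s) (hF s)) x
  have continuous_G : Continuous G :=
    hq.continuous_lift_prod_right (by simpa only [G_apply] using F.continuous)
  exact ⟨{
    toFun := G
    continuous_toFun := continuous_G
    map_zero_left := hq.surjective.forall.2 fun x ↦ (G_apply 0 x).trans (F.apply_zero x)
    map_one_left := hq.surjective.forall.2 fun x ↦ (G_apply 1 x).trans (F.apply_one x) }⟩

/-- The homotopy `(s, γ) ↦ γ ∘ F s` between the precomposition maps `C(Y, Z) → C(X, Z)` of two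
homotopic maps. -/
def precompHomotopy [LocallyCompactPair Y Z] {g₀ g₁ : C(X, Y)} (F : g₀.Homotopy g₁) :
    (compRightContinuousMap Z g₀).Homotopy (compRightContinuousMap Z g₁) where
  toFun p := p.2.comp (F.curry p.1)
  continuous_toFun := continuous_snd.compCM (F.curry.continuous.comp continuous_fst)
  map_zero_left γ := by rw [F.curry_zero]; rfl
  map_one_left γ := by rw [F.curry_one]; rfl

end Homotopy

section Interval

/-- The midpoint `1/2` of the unit interval. -/
noncomputable def intervalMidpoint : I := ⟨1 / 2, by norm_num, by norm_num⟩

theorem symm_intervalMidpoint : σ intervalMidpoint = intervalMidpoint :=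
  Subtype.ext (by norm_num [intervalMidpoint])

theorem convexComb_symm_symm (x y t : I) : convexComb (σ x) (σ y) t = σ (convexComb x y t) := by
  apply Subtype.ext
  simp only [coe_convexComb, coe_symm_eq]
  ring

/-- The affine contraction of the unit interval onto its midpoint, run from the constant map to the
identity. -/
noncomputable def midpointContraction :
    (const I intervalMidpoint).Homotopy (ContinuousMap.id I) where
  toFun p := convexComb intervalMidpoint p.2 p.1
  continuous_toFun := by fun_prop
  map_zero_left := convexComb_zero intervalMidpoint
  map_one_left := convexComb_one intervalMidpoint

theorem midpointContraction_symm (s t : I) :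
    midpointContraction (s, σ t) = σ (midpointContraction (s, t)) :=
  calc convexComb intervalMidpoint (σ t) s
    _ = convexComb (σ intervalMidpoint) (σ t) s := by rw [symm_intervalMidpoint]
    _ = σ (convexComb intervalMidpoint t s) := convexComb_symm_symm _ _ _

end Interval

section PathReversal

variable {X : Type*} [TopologicalSpace X]

theorem rpath_comp (γ : C(I, X)) {g : C(I, I)} (hg : ∀ t, g (σ t) = σ (g t)) :
    (rpath γ).comp g = rpath (γ.comp g) :=
  ContinuousMap.ext fun t ↦ congrArg γ (hg t).symm

namespace PathQuot

/-- The quotient map `C(I,X) → C(I,X)/β`, as a bundled continuous map. -/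
def mk : C(C(I, X), PathQuot X) where
  toFun := Quotient.mk (pathRevSetoid X)
  continuous_toFun := continuous_quotient_mk'

theorem isQuotientMap_mk : IsQuotientMap (mk (X := X)) :=
  isQuotientMap_quotient_mk'

theorem mk_eq_mk {γ δ : C(I, X)} : mk γ = mk δ ↔ γ = δ ∨ γ = rpath δ :=
  Quotient.eq

theorem mk_comp_eq_mk_comp {γ δ : C(I, X)} (h : mk γ = mk δ) {g : C(I, I)}
    (hg : ∀ t, g (σ t) = σ (g t)) : mk (γ.comp g) = mk (δ.comp g) := by
  obtain rfl | rfl := mk_eq_mk.1 h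
  · rfl
  · exact mk_eq_mk.2 (Or.inr (rpath_comp δ hg))

/-- The map `c : X → C(I,X)/β` sending a point to the class of the constant path at it. -/
def ofConst : C(X, PathQuot X) :=
  mk.comp ⟨const I, continuous_const'⟩

/-- Evaluation of a class of paths at the midpoint of the interval; it does not depend on the
representative because the midpoint is fixed by reversal. -/
noncomputable def evalMidpoint : C(PathQuot X, X) where
  toFun := Quotient.lift (fun γ : C(I, X) ↦ γ intervalMidpoint) <| by
    rintro γ δ (rfl | rfl)
    · rfl
    · exact congrArg δ symm_intervalMidpoint
  continuous_toFun := (continuous_eval_const intervalMidpoint).quotient_lift _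

theorem evalMidpoint_comp_ofConst :
    (evalMidpoint (X := X)).comp ofConst = ContinuousMap.id X :=
  rfl

theorem ofConst_comp_evalMidpoint_homotopic :
    (ofConst.comp evalMidpoint).Homotopic (ContinuousMap.id (PathQuot X)) := by
  let F : ((ofConst.comp evalMidpoint).comp mk).Homotopy
      ((ContinuousMap.id (PathQuot X)).comp mk) :=
    (ContinuousMap.Homotopy.refl mk).comp (precompHomotopy midpointContraction)
  refine homotopic_of_homotopy_comp_isQuotientMap isQuotientMap_mk F fun s γ δ h ↦ ?_
  exact mk_comp_eq_mk_comp h (midpointContraction_symm s)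

end PathQuot

end PathReversal

theorem const_path_quotient_homotopy_equiv_general (X : Type*) [TopologicalSpace X] :
    ∃ h : ContinuousMap.HomotopyEquiv X (PathQuot X),
      ∀ x : X, h.toFun x =
        Quotient.mk (pathRevSetoid X) (ContinuousMap.const unitInterval x) :=
  ⟨{ toFun := PathQuot.ofConst
     invFun := PathQuot.evalMidpoint
     left_inv := by rw [PathQuot.evalMidpoint_comp_ofConst]
     right_inv := PathQuot.ofConst_comp_evalMidpoint_homotopic }, fun _ ↦ rfl⟩

/-- For every path-connected space `X`, the map
`c : X → C(I,X)/β` sending `x` to the class of the constant path at `x` is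
a homotopy equivalence. -/
theorem const_path_quotient_homotopy_equiv (X : Type*) [TopologicalSpace X]
    [PathConnectedSpace X] :
    ∃ h : ContinuousMap.HomotopyEquiv X (PathQuot X),
      ∀ x : X, h.toFun x =
        Quotient.mk (pathRevSetoid X) (ContinuousMap.const unitInterval x) :=
  const_path_quotient_homotopy_equiv_general X
end
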